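/- arXiv:1408.0269 — 8 statements merged into one kernel-verified Lean document; each statement's English description precedes it below -/
import Mathlib

section
/- Let k be a field of characteristic different from 2 and let g ∈ k[x,y,z] be homogeneous of degree 4 such that the plane quartic B : g = 0 is smooth, i.e. over an algebraic closure k̄ the polynomials g, ∂g/∂x, ∂g/∂y, ∂g/∂z have no common zero (x₀,y₀,z₀) ≠ (0,0,0). Let X be the del Pezzo surface of degree 2 given by w² = g in P(1,1,1,2). Let d ≥ 1 be an integer and let p, q, r ∈ k[s,t] be homogeneous of degree d with no nonconstant common factor, and set G = g(p,q,r) ∈ k[s,t]. Assume that G ≠ 0, that G is the square of a polynomial in k̄[s,t], and that there exists (s₀,t₀) ∈ k² such that G(s₀,t₀) is a nonzero square in k. Then X is unirational over k: there exist u, v, ω ∈ k(s,t) with u and v algebraically independent over k and ω² = g(u,v,1). -/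
open MvPolynomial

namespace DP2
universe u

section forms
variable {k K : Type u} [Field k] [Field K] [Algebra k K]

def q2 {S : Type u} [CommRing S] [Algebra k S] (φ : K →ₐ[k] S) (H : K) (b : Fin 2 → K)
    (c : Fin 3 → K) (x y μ : S) : S :=
  φ H * μ ^ 2 + (φ (b 0) * x + φ (b 1) * y) * μ
    + (φ (c 0) * x ^ 2 + φ (c 1) * x * y + φ (c 2) * y ^ 2)

def f3 {S : Type u} [CommRing S] [Algebra k S] (φ : K →ₐ[k] S) (A : Fin 4 → K) (x y : S) : S :=
  φ (A 0) * x ^ 3 + φ (A 1) * x ^ 2 * y + φ (A 2) * x * y ^ 2 + φ (A 3) * y ^ 3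

def f4 {S : Type u} [CommRing S] [Algebra k S] (φ : K →ₐ[k] S) (D : Fin 5 → K) (x y : S) : S :=
  φ (D 0) * x ^ 4 + φ (D 1) * x ^ 3 * y + φ (D 2) * x ^ 2 * y ^ 2 + φ (D 3) * x * y ^ 3
    + φ (D 4) * y ^ 4

def MI (g : MvPolynomial (Fin 3) k) (u v H : K) (b : Fin 2 → K)
    (c : Fin 3 → K) (A : Fin 4 → K) (D : Fin 5 → K) : Prop :=
  ∀ (S : Type u) [CommRing S] [Algebra k S] (φ : K →ₐ[k] S) (x y μ : S),
    aeval ![φ u * μ + x, φ v * μ + y, μ] g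
      = q2 φ H b c x y μ ^ 2 + μ * f3 φ A x y + f4 φ D x y

lemma quartic_form (g : MvPolynomial (Fin 3) K) (hg : g.IsHomogeneous 4) :
    ∃ (a0 : K) (a1 : Fin 2 → K) (a2 : Fin 3 → K) (a3 : Fin 4 → K) (a4 : Fin 5 → K),
    ∀ (S : Type u) [CommRing S] [Algebra k S] (φ : K →ₐ[k] S) (x y μ : S),
      eval₂ (φ : K →+* S) ![x, y, μ] g = φ a0 * μ ^ 4 + (φ (a1 0) * x + φ (a1 1) * y) * μ ^ 3 +
        (φ (a2 0) * x ^ 2 + φ (a2 1) * x * y + φ (a2 2) * y ^ 2) * μ ^ 2 +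
        f3 φ a3 x y * μ + f4 φ a4 x y := by
  have key : ∀ s : Finset (Fin 3 →₀ ℕ), (∀ d ∈ s, d 0 + d 1 + d 2 = 4) → ∀ r : (Fin 3 →₀ ℕ) → K,
    ∃ (a0 : K) (a1 : Fin 2 → K) (a2 : Fin 3 → K) (a3 : Fin 4 → K) (a4 : Fin 5 → K),
    ∀ (S : Type u) [CommRing S] [Algebra k S] (φ : K →ₐ[k] S) (x y μ : S),
      ∑ d ∈ s, φ (r d) * (x ^ d 0 * y ^ d 1 * μ ^ d 2) =
       φ a0 * μ ^ 4 + (φ (a1 0) * x + φ (a1 1) * y) * μ ^ 3 +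
        (φ (a2 0) * x ^ 2 + φ (a2 1) * x * y + φ (a2 2) * y ^ 2) * μ ^ 2 +
        f3 φ a3 x y * μ + f4 φ a4 x y := by
    intro s hs r
    induction s using Finset.induction_on with
    | empty => exact ⟨0, 0, 0, 0, 0, by intros; simp [f3, f4]⟩
    | insert d s hd ih =>
      obtain ⟨a0, a1, a2, a3, a4, h⟩ := ih (fun e he => hs e (Finset.mem_insert_of_mem he))
      have h4 := hs d (Finset.mem_insert_self _ _)
      have hx : ∃ i j l : ℕ, d 0 = i ∧ d 1 = j ∧ d 2 = l := ⟨_, _, _, rfl, rfl, rfl⟩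
      obtain ⟨i, j, l, hi, hj, hl⟩ := hx
      refine ⟨a0 + if l = 4 then r d else 0,
        ![a1 0 + if l = 3 ∧ j = 0 then r d else 0, a1 1 + if l = 3 ∧ j = 1 then r d else 0],
        ![a2 0 + if l = 2 ∧ j = 0 then r d else 0, a2 1 + if l = 2 ∧ j = 1 then r d else 0,
          a2 2 + if l = 2 ∧ j = 2 then r d else 0],
        ![a3 0 + if l = 1 ∧ j = 0 then r d else 0, a3 1 + if l = 1 ∧ j = 1 then r d else 0,
          a3 2 + if l = 1 ∧ j = 2 then r d else 0, a3 3 + if l = 1 ∧ j = 3 then r d else 0],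
        ![a4 0 + if l = 0 ∧ j = 0 then r d else 0, a4 1 + if l = 0 ∧ j = 1 then r d else 0,
          a4 2 + if l = 0 ∧ j = 2 then r d else 0, a4 3 + if l = 0 ∧ j = 3 then r d else 0,
          a4 4 + if l = 0 ∧ j = 4 then r d else 0], ?_⟩
      intro S _ _ φ x y μ
      rw [Finset.sum_insert hd, h S φ x y μ, hi, hj, hl]
      rw [hi, hj, hl] at h4
      have hl4 : l ≤ 4 := by omega
      have hj4 : j ≤ 4 - l := by omega
      have : i = 4 - l - j := by omega
      subst this
      clear hi hj hl hs h
      interval_cases l <;> interval_cases j <;> simp [f3, f4] <;> ring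
  obtain ⟨a0, a1, a2, a3, a4, h⟩ := key g.support (by
    intro d hd
    have := hg (mem_support_iff.mp hd)
    rw [Finsupp.weight_apply, Finsupp.sum_fintype _ _ (by simp)] at this
    simpa [Fin.sum_univ_three] using this) (fun d => g.coeff d)
  refine ⟨a0, a1, a2, a3, a4, fun S _ _ φ x y μ => ?_⟩
  rw [← h, eval₂_eq']
  simp [Fin.prod_univ_three]

lemma exists_MI (h2 : (2 : K) ≠ 0) (g : MvPolynomial (Fin 3) k) (hg : g.IsHomogeneous 4)
    (u v H : K) (hH : H ≠ 0) (hgH : aeval ![u, v, 1] g = H ^ 2) :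
    ∃ b c A D, MI g u v H b c A D := by
  let g' : MvPolynomial (Fin 3) K := aeval ![C u * X 2 + X 0, C v * X 2 + X 1, X 2] g
  have hg' : g'.IsHomogeneous 4 := by
    have := hg.aeval (R := k) (S := K) (τ := Fin 3) (n := 1) ![C u * X 2 + X 0, C v * X 2 + X 1, X 2] (by
      intro i
      fin_cases i
      · exact ((isHomogeneous_X _ _).C_mul _).add (isHomogeneous_X _ _)
      · exact ((isHomogeneous_X _ _).C_mul _).add (isHomogeneous_X _ _)
      · exact isHomogeneous_X _ _)
    exact this
  obtain ⟨a0, a1, a2, a3, a4, h⟩ := quartic_form (k := k) g' hg'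
  have hev : ∀ (S : Type u) [CommRing S] [Algebra k S] (φ : K →ₐ[k] S) (x y μ : S),
      eval₂ (φ : K →+* S) ![x, y, μ] g' = aeval ![φ u * μ + x, φ v * μ + y, μ] g := by
    intro S _ _ φ x y μ
    have : ((eval₂Hom (φ : K →+* S) ![x, y, μ]).comp
        (aeval (R := k) ![C u * X 2 + X 0, C v * X 2 + X 1, X 2]).toRingHom)
        = (aeval (R := k) ![φ u * μ + x, φ v * μ + y, μ]).toRingHom := by
      apply MvPolynomial.ringHom_ext
      · intro r
        simp [MvPolynomial.algebraMap_eq, IsScalarTower.algebraMap_apply k K (MvPolynomial (Fin 3) K)]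
      · intro i
        fin_cases i <;> simp
    exact DFunLike.congr_fun this g
  have ha0 : a0 = H ^ 2 := by
    have h1 := h K (AlgHom.id k K) 0 0 1
    rw [hev] at h1
    simpa [hgH, f3, f4] using h1.symm
  let b : Fin 2 → K := fun i => a1 i / (2 * H)
  have hb : ∀ i, a1 i = 2 * H * b i := fun i => by simp only [b]; field_simp
  let c : Fin 3 → K := ![(a2 0 - b 0 ^ 2) / (2 * H), (a2 1 - 2 * b 0 * b 1) / (2 * H),
    (a2 2 - b 1 ^ 2) / (2 * H)]
  have hc0 : a2 0 = 2 * H * c 0 + b 0 ^ 2 := by simp only [c, Matrix.cons_val]; field_simp; ring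
  have hc1 : a2 1 = 2 * H * c 1 + 2 * b 0 * b 1 := by
    simp only [c, Matrix.cons_val]; field_simp; ring
  have hc2 : a2 2 = 2 * H * c 2 + b 1 ^ 2 := by simp only [c, Matrix.cons_val]; field_simp; ring
  clear_value b c
  refine ⟨b, c, ![a3 0 - 2 * b 0 * c 0, a3 1 - 2 * b 0 * c 1 - 2 * b 1 * c 0,
    a3 2 - 2 * b 0 * c 2 - 2 * b 1 * c 1, a3 3 - 2 * b 1 * c 2],
    ![a4 0 - c 0 ^ 2, a4 1 - 2 * c 0 * c 1, a4 2 - 2 * c 0 * c 2 - c 1 ^ 2, a4 3 - 2 * c 1 * c 2,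
      a4 4 - c 2 ^ 2], ?_⟩
  intro S _ _ φ x y μ
  rw [← hev, h]
  simp only [ha0, hb, hc0, hc1, hc2, q2, f3, f4, Matrix.cons_val, map_sub, map_mul, map_pow, map_add,
    map_ofNat]
  ring
end forms
end DP2

namespace DP2
universe u
lemma taylor {k R : Type*} [Field k] [CommRing R] [Algebra k R] (g : MvPolynomial (Fin 3) k)
   (a b : Fin 3 → R) : aeval (R := k) (fun i => (TrivSqZeroExt.inl (a i) + TrivSqZeroExt.inr (b i) : DualNumber R)) g
     = TrivSqZeroExt.inl (aeval a g) + TrivSqZeroExt.inr (∑ i, b i * aeval a (pderiv i g)) := by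
  induction g using MvPolynomial.induction_on with
  | C r => simp; rfl
  | add p q hp hq =>
    simp only [map_add, hp, hq, mul_add, Finset.sum_add_distrib, TrivSqZeroExt.inl_add, TrivSqZeroExt.inr_add]
    ring
  | mul_X p n hp =>
    simp only [map_mul, hp, aeval_X, Derivation.leibniz, pderiv_X, map_add, smul_eq_mul, mul_add]
    ext
    · simp
    · simp only [Fin.sum_univ_three]
      fin_cases n <;> simp <;> ring

noncomputable def dmap (k N : Type u) [Field k] [Field N] [Algebra k N] :
    DualNumber N →ₐ[k] DualNumber (Polynomial N) where
  toFun z := TrivSqZeroExt.inl (Polynomial.C z.fst) + TrivSqZeroExt.inr (Polynomial.C z.snd)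
  map_one' := by simp
  map_zero' := by simp
  map_add' := by intro x y; ext <;> simp
  map_mul' := by intro x y; ext <;> simp
  commutes' := by intro r; ext <;> simp [TrivSqZeroExt.algebraMap_eq_inl']

section core
variable {k K N : Type u} [Field k] [Field K] [Algebra k K] [Field N] [Algebra k N] [Algebra K N]
  [IsScalarTower k K N]

/-- partial derivative along the pencil -/
noncomputable def gp (g : MvPolynomial (Fin 3) k) (u v x y : N) (i : Fin 3) : Polynomial N :=
  aeval ![Polynomial.C u * Polynomial.X + Polynomial.C x,
    Polynomial.C v * Polynomial.X + Polynomial.C y, Polynomial.X] (pderiv i g)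

noncomputable def qp (H : K) (b : Fin 2 → K) (c : Fin 3 → K) (x y : N) : Polynomial N :=
  Polynomial.C (algebraMap K N H) * Polynomial.X ^ 2 +
  Polynomial.C (algebraMap K N (b 0) * x + algebraMap K N (b 1) * y) * Polynomial.X +
  Polynomial.C (algebraMap K N (c 0) * x ^ 2 + algebraMap K N (c 1) * x * y
    + algebraMap K N (c 2) * y ^ 2)

open TrivSqZeroExt in
lemma core {g : MvPolynomial (Fin 3) k} {u v H : K} {b : Fin 2 → K}
    {c : Fin 3 → K} {A : Fin 4 → K} {D : Fin 5 → K} (h : MI g u v H b c A D)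
    (φ : K →ₐ[k] DualNumber N) (hφ : ∀ a, (φ a).fst = algebraMap K N a)
    (x y : DualNumber N) (hA : f3 φ A x y = 0) (hD : f4 φ D x y = 0) (m : Polynomial N) :
    qp H b c x.fst y.fst ∣
      gp g (algebraMap K N u) (algebraMap K N v) x.fst y.fst 0 *
        (Polynomial.C (φ u).snd * Polynomial.X + Polynomial.C x.snd
          + Polynomial.C (algebraMap K N u) * m) +
      gp g (algebraMap K N u) (algebraMap K N v) x.fst y.fst 1 *
        (Polynomial.C (φ v).snd * Polynomial.X + Polynomial.C y.snd
          + Polynomial.C (algebraMap K N v) * m) +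
      gp g (algebraMap K N u) (algebraMap K N v) x.fst y.fst 2 * m := by
  have h1 := h (DualNumber (Polynomial N)) ((dmap k N).comp φ) (dmap k N x) (dmap k N y)
    (inl Polynomial.X + inr m)
  have e3 : f3 ((dmap k N).comp φ) A (dmap k N x) (dmap k N y) = 0 := by
    have := congrArg (dmap k N) hA
    simpa [f3] using this
  have e4 : f4 ((dmap k N).comp φ) D (dmap k N x) (dmap k N y) = 0 := by
    have := congrArg (dmap k N) hD
    simpa [f4] using this
  rw [e3, e4, mul_zero, add_zero, add_zero] at h1
  have e5 : (![((dmap k N).comp φ) u * (inl Polynomial.X + inr m) + dmap k N x,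
    ((dmap k N).comp φ) v * (inl Polynomial.X + inr m) + dmap k N y,
    (inl Polynomial.X + inr m)] : Fin 3 → DualNumber (Polynomial N)) = fun i =>
     inl ((![Polynomial.C (algebraMap K N u) * Polynomial.X + Polynomial.C x.fst,
      Polynomial.C (algebraMap K N v) * Polynomial.X + Polynomial.C y.fst, Polynomial.X] :
      Fin 3 → Polynomial N) i) +
     inr ((![Polynomial.C (φ u).snd * Polynomial.X + Polynomial.C x.snd
          + Polynomial.C (algebraMap K N u) * m, Polynomial.C (φ v).snd * Polynomial.X +
          Polynomial.C y.snd
          + Polynomial.C (algebraMap K N v) * m, m] : Fin 3 → Polynomial N) i) := by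
    funext i
    fin_cases i
    · ext
      · simp [dmap, hφ]
      · simp [dmap, hφ]; ring
    · ext
      · simp [dmap, hφ]
      · simp [dmap, hφ]; ring
    · simp
  rw [e5, taylor] at h1
  have h2 := congrArg snd h1
  rw [pow_two] at h2
  simp only [snd_add, snd_inl, snd_inr, zero_add, snd_mul, Fin.sum_univ_three] at h2
  have e6 : (q2 ((dmap k N).comp φ) H b c (dmap k N x) (dmap k N y) (inl Polynomial.X + inr m)).fst
     = qp H b c x.fst y.fst := by
    simp [q2, qp, dmap, hφ]
  rw [e6] at h2
  simp only [MulOpposite.smul_eq_mul_unop, smul_eq_mul, MulOpposite.unop_op] at h2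
  refine ⟨2 * (q2 ((dmap k N).comp φ) H b c (dmap k N x) (dmap k N y)
    (inl Polynomial.X + inr m)).snd, ?_⟩
  simp only [Matrix.cons_val] at h2
  simp only [gp]
  linear_combination h2

lemma core0 {g : MvPolynomial (Fin 3) k} {u v H : K} {b : Fin 2 → K}
    {c : Fin 3 → K} {A : Fin 4 → K} {D : Fin 5 → K} (h : MI g u v H b c A D)
    (x y : N) (hA : f3 (IsScalarTower.toAlgHom k K N) A x y = 0)
    (hD : f4 (IsScalarTower.toAlgHom k K N) D x y = 0) (m : N) (hm : (qp H b c x y).eval m = 0) :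
    aeval ![algebraMap K N u * m + x, algebraMap K N v * m + y, m] g = 0 := by
  have := h N (IsScalarTower.toAlgHom k K N) x y m
  rw [hA, hD] at this
  simp only [IsScalarTower.coe_toAlgHom'] at this
  rw [this]
  have e : q2 (IsScalarTower.toAlgHom k K N) H b c x y m = (qp H b c x y).eval m := by
    simp [q2, qp]
  rw [e, hm]; simp

lemma gp_eval (g : MvPolynomial (Fin 3) k) (u v x y : N) (i : Fin 3) (m : N) :
    (gp g u v x y i).eval m = aeval ![u * m + x, v * m + y, m] (pderiv i g) := by
  unfold gp
  rw [← Polynomial.coe_aeval_eq_eval]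
  change (Polynomial.aeval m).restrictScalars k _ = _
  rw [← AlgHom.comp_apply, MvPolynomial.comp_aeval]
  congr 2
  funext i; fin_cases i <;> simp
end core
end DP2

namespace DP2
universe u
section bit
variable {k K N : Type u} [Field k] [Field K] [Algebra k K] [Field N] [Algebra k N] [Algebra K N]
  [IsScalarTower k K N]

noncomputable def Ap (k : Type u) {K : Type u} [Field k] [Field K] [Algebra k K]
    (A : Fin 4 → K) (κ : K) : Polynomial K :=
  f3 (IsScalarTower.toAlgHom k K (Polynomial K)) A Polynomial.X
    (Polynomial.C κ * Polynomial.X + 1)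
noncomputable def Dp (k : Type u) {K : Type u} [Field k] [Field K] [Algebra k K]
    (D : Fin 5 → K) (κ : K) : Polynomial K :=
  f4 (IsScalarTower.toAlgHom k K (Polynomial K)) D Polynomial.X
    (Polynomial.C κ * Polynomial.X + 1)

lemma eval_Ap {S : Type u} [CommRing S] [Algebra k S] (φ : K →ₐ[k] S) (A : Fin 4 → K) (κ : K)
    (x : S) : (Ap k A κ).eval₂ (φ : K →+* S) x = f3 φ A x (φ κ * x + 1) := by
  simp [Ap, f3, Polynomial.algebraMap_eq, Polynomial.eval₂_add, Polynomial.eval₂_mul, Polynomial.eval₂_pow]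

lemma eval_Dp {S : Type u} [CommRing S] [Algebra k S] (φ : K →ₐ[k] S) (D : Fin 5 → K) (κ : K)
    (x : S) : (Dp k D κ).eval₂ (φ : K →+* S) x = f4 φ D x (φ κ * x + 1) := by
  simp [Dp, f4, Polynomial.algebraMap_eq, Polynomial.eval₂_add, Polynomial.eval₂_mul, Polynomial.eval₂_pow]

lemma van {S : Type u} [CommRing S] [Algebra k S] (φ : K →ₐ[k] S) {A : Fin 4 → K}
    {D : Fin 5 → K} {κ : K} {e : Polynomial K} (hA : e ∣ Ap k A κ) (hD : e ∣ Dp k D κ) (x : S)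
    (hx : e.eval₂ (φ : K →+* S) x = 0) :
    f3 φ A x (φ κ * x + 1) = 0 ∧ f4 φ D x (φ κ * x + 1) = 0 := by
  obtain ⟨a, ha⟩ := hA
  obtain ⟨b, hb⟩ := hD
  rw [← eval_Ap, ← eval_Dp, ha, hb, Polynomial.eval₂_mul, Polynomial.eval₂_mul, hx]
  simp

variable (k K N) in
noncomputable def triv : K →ₐ[k] DualNumber N :=
  (TrivSqZeroExt.inlAlgHom k N N).comp (IsScalarTower.toAlgHom k K N)

lemma triv_apply (a : K) : triv k K N a = TrivSqZeroExt.inl (algebraMap K N a) := rfl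

open TrivSqZeroExt in
lemma two_dirs {g : MvPolynomial (Fin 3) k} {u v H : K} {b : Fin 2 → K}
    {c : Fin 3 → K} {A : Fin 4 → K} {D : Fin 5 → K} (h : MI g u v H b c A D)
    (x y : N) (hA : f3 (IsScalarTower.toAlgHom k K N) A x y = 0)
    (hD : f4 (IsScalarTower.toAlgHom k K N) D x y = 0) :
    qp H b c x y ∣ gp g (algebraMap K N u) (algebraMap K N v) x y 0 * Polynomial.C x +
      gp g (algebraMap K N u) (algebraMap K N v) x y 1 * Polynomial.C y ∧
    qp H b c x y ∣ gp g (algebraMap K N u) (algebraMap K N v) x y 0 *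
        Polynomial.C (algebraMap K N u) +
      gp g (algebraMap K N u) (algebraMap K N v) x y 1 * Polynomial.C (algebraMap K N v) +
      gp g (algebraMap K N u) (algebraMap K N v) x y 2 := by
  have hA' : f3 (triv k K N) A (inl x) (inl y) = 0 := by
    have := congrArg (TrivSqZeroExt.inlAlgHom k N N) hA
    simp only [f3, map_add, map_mul, map_pow] at this
    exact this
  have hD' : f4 (triv k K N) D (inl x) (inl y) = 0 := by
    have := congrArg (TrivSqZeroExt.inlAlgHom k N N) hD
    simp only [f4, map_add, map_mul, map_pow] at this
    exact this
  constructor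
  · have := core h (triv k K N) (fun a => rfl) (inl x * (1 + inr 1)) (inl y * (1 + inr 1)) (by
      rw [show f3 (triv k K N) A (inl x * (1 + inr 1)) (inl y * (1 + inr 1)) =
        f3 (triv k K N) A (inl x) (inl y) * (1 + inr 1) ^ 3 by simp only [f3]; ring, hA', zero_mul])
      (by
      rw [show f4 (triv k K N) D (inl x * (1 + inr 1)) (inl y * (1 + inr 1)) =
        f4 (triv k K N) D (inl x) (inl y) * (1 + inr 1) ^ 4 by simp only [f4]; ring, hD', zero_mul]) 0
    simpa [triv_apply] using this
  · have := core h (triv k K N) (fun a => rfl) (inl x) (inl y) hA' hD' 1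
    simpa [triv_apply] using this

lemma exists_qroot [IsAlgClosed N] {H : K} (hH : H ≠ 0) (b : Fin 2 → K) (c : Fin 3 → K) (x y : N) :
    (qp H b c x y).natDegree = 2 ∧ ∃ m, (qp H b c x y).eval m = 0 := by
  have h1 : (qp H b c x y).natDegree = 2 :=
    Polynomial.natDegree_quadratic (by simpa using hH)
  refine ⟨h1, ?_⟩
  obtain ⟨m, hm⟩ := IsAlgClosed.exists_root (qp H b c x y) (by
    intro h
    have := Polynomial.natDegree_eq_zero_iff_degree_le_zero.mpr h.le
    omega)
  exact ⟨m, hm⟩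

/-- no common root of q, g0, g1 -/
lemma nosing {g : MvPolynomial (Fin 3) k}
    (sm : ∀ x : Fin 3 → N, aeval x g = 0 → (∀ i, aeval x (pderiv i g) = 0) → x = 0)
    {u v H : K} {b : Fin 2 → K}
    {c : Fin 3 → K} {A : Fin 4 → K} {D : Fin 5 → K} (h : MI g u v H b c A D)
    (x y : N) (hA : f3 (IsScalarTower.toAlgHom k K N) A x y = 0)
    (hD : f4 (IsScalarTower.toAlgHom k K N) D x y = 0) (hxy : ¬ (x = 0 ∧ y = 0)) (m : N)
    (hm : (qp H b c x y).eval m = 0)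
    (h0 : (gp g (algebraMap K N u) (algebraMap K N v) x y 0).eval m = 0)
    (h1 : (gp g (algebraMap K N u) (algebraMap K N v) x y 1).eval m = 0) : False := by
  have h2 : (gp g (algebraMap K N u) (algebraMap K N v) x y 2).eval m = 0 := by
    obtain ⟨w, hw⟩ := (two_dirs h x y hA hD).2
    have := congrArg (Polynomial.eval m) hw
    simpa [h0, h1, hm] using this
  have h3 := sm _ (core0 h x y hA hD m hm) (by
    intro i
    rw [← gp_eval]
    fin_cases i
    · exact h0
    · exact h1
    · exact h2)
  have e2 := congrFun h3 2
  have e0 := congrFun h3 0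
  have e1 := congrFun h3 1
  simp at e2 e0 e1
  subst e2
  simp at e0 e1
  exact hxy ⟨e0, e1⟩

open TrivSqZeroExt in
lemma simple_root [IsAlgClosed N] {g : MvPolynomial (Fin 3) k}
    (sm : ∀ x : Fin 3 → N, aeval x g = 0 → (∀ i, aeval x (pderiv i g) = 0) → x = 0)
    {u v H : K} (hH : H ≠ 0) {b : Fin 2 → K}
    {c : Fin 3 → K} {A : Fin 4 → K} {D : Fin 5 → K} (h : MI g u v H b c A D)
    {κ : K} {e : Polynomial K} (hA : e ∣ Ap k A κ) (hD : e ∣ Dp k D κ)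
    (ρ : N) (hρ : Polynomial.aeval ρ e = 0) : Polynomial.aeval ρ (Polynomial.derivative e) ≠ 0 := by
  intro hd
  obtain ⟨vA, vD⟩ := van (IsScalarTower.toAlgHom k K N) hA hD ρ hρ
  simp only [IsScalarTower.coe_toAlgHom'] at vA vD
  obtain ⟨d1, -⟩ := two_dirs h _ _ vA vD
  have hev : e.eval₂ ((triv k K N : K →ₐ[k] DualNumber N) : K →+* DualNumber N)
      (inl ρ + inr 1) = 0 := by
    have h1 := Polynomial.aeval_add_of_sq_eq_zero (S := DualNumber N)
      (e.map (algebraMap K N)) (inl ρ) (inr 1) (by rw [pow_two, inr_mul_inr])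
    simp only [Polynomial.derivative_map, Polynomial.aeval_map_algebraMap] at h1
    have h2 : ∀ f : Polynomial K, Polynomial.aeval (inl ρ : DualNumber N) f
        = inl (Polynomial.aeval ρ f) := by
      intro f
      have := Polynomial.aeval_algebraMap_apply (DualNumber N) ρ f
      exact this
    rw [h2, h2, hρ, hd, inl_zero, zero_mul, add_zero] at h1
    exact h1
  obtain ⟨tA, tD⟩ := van (triv k K N) hA hD _ hev
  have d2 := core h (triv k K N) (fun a => rfl) _ _ tA tD 0
  simp [triv_apply] at d2
  obtain ⟨-, m, hm⟩ := exists_qroot hH b c ρ (algebraMap K N κ * ρ + 1)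
  obtain ⟨w1, hw1⟩ := d1
  obtain ⟨w2, hw2⟩ := d2
  have e1 := congrArg (Polynomial.eval m) hw1
  have e2 := congrArg (Polynomial.eval m) hw2
  simp only [Polynomial.eval_add, Polynomial.eval_mul, hm, zero_mul, Polynomial.eval_C] at e1 e2
  have g1 : (gp g (algebraMap K N u) (algebraMap K N v) ρ (algebraMap K N κ * ρ + 1) 1).eval m = 0 := by
    linear_combination e1 - ρ * e2
  refine nosing sm h _ _ vA vD ?_ m hm ?_ g1
  · rintro ⟨h1, h2⟩
    rw [h1] at h2; simp at h2
  · rw [g1] at e2; linear_combination e2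

open TrivSqZeroExt in
lemma tangent [IsAlgClosed N] {g : MvPolynomial (Fin 3) k}
    (sm : ∀ x : Fin 3 → N, aeval x g = 0 → (∀ i, aeval x (pderiv i g) = 0) → x = 0)
    {u v H : K} (hH : H ≠ 0) {b : Fin 2 → K}
    {c : Fin 3 → K} {A : Fin 4 → K} {D : Fin 5 → K} (h : MI g u v H b c A D)
    {κ : K} {e : Polynomial K} (hA : e ∣ Ap k A κ) (hD : e ∣ Dp k D κ)
    (ρ : N) (hρ : Polynomial.aeval ρ e = 0)
    (φ : K →ₐ[k] DualNumber N) (hφ : ∀ a, (φ a).fst = algebraMap K N a) :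
    (φ u).snd * (algebraMap K N κ * ρ + 1) - (φ v).snd * ρ = 0 := by
  have hs := simple_root sm hH h hA hD ρ hρ
  obtain ⟨vA, vD⟩ := van (IsScalarTower.toAlgHom k K N) hA hD ρ hρ
  simp only [IsScalarTower.coe_toAlgHom'] at vA vD
  obtain ⟨d1, -⟩ := two_dirs h _ _ vA vD
  have hfst : ∀ f : Polynomial K, (f.eval₂ (φ : K →+* DualNumber N) (inl ρ)).fst =
      Polynomial.aeval ρ f := by
    intro f
    have := Polynomial.hom_eval₂ f (φ : K →+* DualNumber N)
      ((fstHom N N N : DualNumber N →ₐ[N] N) : DualNumber N →+* N) (inl ρ)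
    simp only [RingHom.coe_coe, fstHom_apply, fst_inl] at this
    rw [this, Polynomial.aeval_def]
    congr 1
    ext a; simp [hφ]
  obtain ⟨ρ', hev⟩ : ∃ ρ' : N, e.eval₂ (φ : K →+* DualNumber N) (inl ρ + inr ρ') = 0 := by
    refine ⟨- (e.eval₂ (φ : K →+* DualNumber N) (inl ρ)).snd /
      Polynomial.aeval ρ (Polynomial.derivative e), ?_⟩
    have h1 := Polynomial.aeval_add_of_sq_eq_zero (S := DualNumber N)
      (e.map (φ : K →+* DualNumber N)) (inl ρ) (inr (- (e.eval₂ (φ : K →+* DualNumber N) (inl ρ)).snd /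
      Polynomial.aeval ρ (Polynomial.derivative e))) (by rw [pow_two, inr_mul_inr])
    simp only [Polynomial.derivative_map, Polynomial.coe_aeval_eq_eval, Polynomial.eval_map] at h1
    rw [h1]
    ext
    · simp [hfst, hρ]
    · simp [hfst]; field_simp; ring
  obtain ⟨tA, tD⟩ := van φ hA hD _ hev
  have d2 := core h φ hφ _ _ tA tD 0
  have ef : (φ κ * (inl ρ + inr ρ') + 1).fst = algebraMap K N κ * ρ + 1 := by simp [hφ]
  have ef' : (inl ρ + inr ρ' : DualNumber N).fst = ρ := by simp
  rw [ef, ef'] at d2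
  simp only [mul_zero, add_zero] at d2
  set x := ρ
  set y := algebraMap K N κ * ρ + 1
  set sx := (inl x + inr ρ' : DualNumber N).snd
  set sy := (φ κ * (inl x + inr ρ') + 1).snd
  set g0 := gp g (algebraMap K N u) (algebraMap K N v) x y 0
  set g1 := gp g (algebraMap K N u) (algebraMap K N v) x y 1
  let L : Polynomial N := Polynomial.C ((φ u).snd * y - (φ v).snd * x) * Polynomial.X +
    Polynomial.C (sx * y - sy * x)
  have hL0 : qp H b c x y ∣ L * g0 := by
    have := (d2.mul_right (Polynomial.C y)).sub
      (d1.mul_right (Polynomial.C (φ v).snd * Polynomial.X + Polynomial.C sy))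
    convert this using 1
    simp only [L, map_sub, map_mul]; ring
  have hL1 : qp H b c x y ∣ L * g1 := by
    have := (d1.mul_right (Polynomial.C (φ u).snd * Polynomial.X + Polynomial.C sx)).sub
      (d2.mul_right (Polynomial.C x))
    convert this using 1
    simp only [L, map_sub, map_mul]; ring
  classical
  have hcop : IsCoprime (qp H b c x y) (EuclideanDomain.gcd g0 g1) := by
    rw [Polynomial.isCoprime_iff_aeval_ne_zero_of_isAlgClosed N N]
    intro m
    by_contra! hcon
    obtain ⟨c1, c2⟩ := hcon
    rw [Polynomial.coe_aeval_eq_eval] at c1 c2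
    refine nosing sm h x y vA vD ?_ m c1 ?_ ?_
    · rintro ⟨h1, h2⟩
      have : y = 1 := by
        change algebraMap K N κ * x + 1 = 1
        rw [h1]; simp
      rw [this] at h2; exact one_ne_zero h2
    · exact Polynomial.eval_eq_zero_of_dvd_of_eval_eq_zero (EuclideanDomain.gcd_dvd_left g0 g1) c2
    · exact Polynomial.eval_eq_zero_of_dvd_of_eval_eq_zero (EuclideanDomain.gcd_dvd_right g0 g1) c2
  have hLd : qp H b c x y ∣ L := by
    apply hcop.dvd_of_dvd_mul_right
    rw [EuclideanDomain.gcd_eq_gcd_ab, mul_add, ← mul_assoc, ← mul_assoc]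
    exact (hL0.mul_right _).add (hL1.mul_right _)
  have hLz : L = 0 := by
    by_contra hne
    have := Polynomial.natDegree_le_of_dvd hLd hne
    rw [(exists_qroot hH b c x y).1] at this
    have h3 : L.natDegree ≤ 1 := Polynomial.natDegree_linear_le
    omega
  have := congrArg (fun p => Polynomial.coeff p 1) hLz
  simpa [L] using this

/-- Two distinct directions are impossible. -/
lemma gcd_deg [IsAlgClosed N] {g : MvPolynomial (Fin 3) k}
    (sm : ∀ x : Fin 3 → N, aeval x g = 0 → (∀ i, aeval x (pderiv i g) = 0) → x = 0)
    {u v H : K} (hH : H ≠ 0) {b : Fin 2 → K}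
    {c : Fin 3 → K} {A : Fin 4 → K} {D : Fin 5 → K} (h : MI g u v H b c A D)
    {κ : K} {e : Polynomial K} (hA : e ∣ Ap k A κ) (hD : e ∣ Dp k D κ)
    (φ : K →ₐ[k] DualNumber N) (hφ : ∀ a, (φ a).fst = algebraMap K N a) (hu : (φ u).snd ≠ 0) :
    e ≠ 0 ∧ e.natDegree ≤ 1 := by
  have he : e ≠ 0 := by
    rintro rfl
    exact simple_root sm hH h hA hD (0 : N) (by simp) (by simp)
  refine ⟨he, ?_⟩
  by_contra! hdeg
  let E := e.map (algebraMap K N)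
  have hE : E.natDegree = e.natDegree := Polynomial.natDegree_map _
  obtain ⟨ρ, hρ⟩ := IsAlgClosed.exists_root E (by
    intro h
    have := Polynomial.natDegree_eq_zero_iff_degree_le_zero.mpr h.le
    omega)
  obtain ⟨E1, hE1⟩ := Polynomial.dvd_iff_isRoot.mpr hρ
  have hE0 : E1 ≠ 0 := by
    rintro rfl
    rw [mul_zero] at hE1
    rw [hE1] at hE; simp at hE; omega
  have hd1 : E.natDegree = 1 + E1.natDegree := by
    rw [hE1, Polynomial.natDegree_mul (Polynomial.X_sub_C_ne_zero _) hE0,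
      Polynomial.natDegree_X_sub_C]
  obtain ⟨σ, hσ⟩ := IsAlgClosed.exists_root E1 (by
    intro h
    have := Polynomial.natDegree_eq_zero_iff_degree_le_zero.mpr h.le
    omega)
  have conv : ∀ a : N, ∀ f : Polynomial K, Polynomial.aeval a f =
      (f.map (algebraMap K N)).eval a := fun a f => by
    rw [Polynomial.eval_map, Polynomial.aeval_def]
  have hρ' : Polynomial.aeval ρ e = 0 := by rw [conv]; exact hρ
  have hσ' : Polynomial.aeval σ e = 0 := by
    rw [conv]; change E.eval σ = 0
    rw [hE1, Polynomial.eval_mul, hσ.eq_zero, mul_zero]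
  have hne : σ ≠ ρ := by
    rintro rfl
    apply simple_root sm hH h hA hD σ hρ'
    rw [conv, ← Polynomial.derivative_map]
    change (Polynomial.derivative E).eval σ = 0
    rw [hE1, Polynomial.derivative_mul]
    simp [hσ.eq_zero]
  have t1 := tangent sm hH h hA hD ρ hρ' φ hφ
  have t2 := tangent sm hH h hA hD σ hσ' φ hφ
  apply hu
  have h1 : (σ - ρ) * ((φ u).snd * algebraMap K N κ - (φ v).snd) = 0 := by
    linear_combination t2 - t1
  rcases mul_eq_zero.mp h1 with h1 | h1
  · exact absurd (sub_eq_zero.mp h1) hne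
  · linear_combination t1 - ρ * h1
end bit
end DP2

namespace DP2
universe u
section kap
variable {k K N : Type u} [Field k] [Field K] [Algebra k K] [Field N] [Algebra k N] [Algebra K N]
  [IsScalarTower k K N]

lemma Ap_coeff (A : Fin 4 → K) (κ : K) :
    (Ap k A κ).coeff 3 = A 0 + A 1 * κ + A 2 * κ ^ 2 + A 3 * κ ^ 3 := by
  have : Ap k A κ = Polynomial.C (A 0 + A 1 * κ + A 2 * κ ^ 2 + A 3 * κ ^ 3) * Polynomial.X ^ 3 +
      Polynomial.C (A 1 + 2 * A 2 * κ + 3 * A 3 * κ ^ 2) * Polynomial.X ^ 2 +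
      Polynomial.C (A 2 + 3 * A 3 * κ) * Polynomial.X + Polynomial.C (A 3) := by
    simp only [Ap, f3, IsScalarTower.coe_toAlgHom', Polynomial.algebraMap_eq, map_add, map_mul,
      map_pow, map_ofNat]
    ring
  rw [this]
  simp only [Polynomial.coeff_add, Polynomial.coeff_C_mul, Polynomial.coeff_X_pow,
    Polynomial.coeff_X, Polynomial.coeff_C]
  simp

lemma Dp_coeff (D : Fin 5 → K) (κ : K) :
    (Dp k D κ).coeff 4 = D 0 + D 1 * κ + D 2 * κ ^ 2 + D 3 * κ ^ 3 + D 4 * κ ^ 4 := by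
  have : Dp k D κ = Polynomial.C (D 0 + D 1 * κ + D 2 * κ ^ 2 + D 3 * κ ^ 3 + D 4 * κ ^ 4)
        * Polynomial.X ^ 4 +
      Polynomial.C (D 1 + 2 * D 2 * κ + 3 * D 3 * κ ^ 2 + 4 * D 4 * κ ^ 3) * Polynomial.X ^ 3 +
      Polynomial.C (D 2 + 3 * D 3 * κ + 6 * D 4 * κ ^ 2) * Polynomial.X ^ 2 +
      Polynomial.C (D 3 + 4 * D 4 * κ) * Polynomial.X + Polynomial.C (D 4) := by
    simp only [Dp, f4, IsScalarTower.coe_toAlgHom', Polynomial.algebraMap_eq, map_add, map_mul,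
      map_pow, map_ofNat]
    ring
  rw [this]
  simp only [Polynomial.coeff_add, Polynomial.coeff_C_mul, Polynomial.coeff_X_pow,
    Polynomial.coeff_X, Polynomial.coeff_C]
  simp

lemma A_zero [Infinite K] (A : Fin 4 → K)
    (h : ∀ κ : K, A 0 + A 1 * κ + A 2 * κ ^ 2 + A 3 * κ ^ 3 = 0) : A = 0 := by
  have : Polynomial.C (A 0) + Polynomial.C (A 1) * Polynomial.X +
     Polynomial.C (A 2) * Polynomial.X ^ 2 + Polynomial.C (A 3) * Polynomial.X ^ 3 = 0 := by
    apply Polynomial.funext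
    intro r; simpa using h r
  funext i
  have := congrArg (fun p => Polynomial.coeff p i) this
  fin_cases i <;> simpa [Polynomial.coeff_X, Polynomial.coeff_C, Polynomial.coeff_X_pow] using this

lemma D_zero [Infinite K] (A : Fin 5 → K)
    (h : ∀ κ : K, A 0 + A 1 * κ + A 2 * κ ^ 2 + A 3 * κ ^ 3 + A 4 * κ ^ 4 = 0) : A = 0 := by
  have : Polynomial.C (A 0) + Polynomial.C (A 1) * Polynomial.X +
     Polynomial.C (A 2) * Polynomial.X ^ 2 + Polynomial.C (A 3) * Polynomial.X ^ 3 +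
     Polynomial.C (A 4) * Polynomial.X ^ 4 = 0 := by
    apply Polynomial.funext
    intro r; simpa using h r
  funext i
  have := congrArg (fun p => Polynomial.coeff p i) this
  fin_cases i <;> simpa [Polynomial.coeff_X, Polynomial.coeff_C, Polynomial.coeff_X_pow] using this

lemma choose_kappa [Infinite K] [IsAlgClosed N] {g : MvPolynomial (Fin 3) k}
    (sm : ∀ x : Fin 3 → N, aeval x g = 0 → (∀ i, aeval x (pderiv i g) = 0) → x = 0)
    {u v H : K} (hH : H ≠ 0) {b : Fin 2 → K}
    {c : Fin 3 → K} {A : Fin 4 → K} {D : Fin 5 → K} (h : MI g u v H b c A D)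
    (φ : K →ₐ[k] DualNumber N) (hφ : ∀ a, (φ a).fst = algebraMap K N a) (hu : (φ u).snd ≠ 0) :
    ∃ (κ : K) (e A' D' : Polynomial K), Ap k A κ = e * A' ∧ Dp k D κ = e * D' ∧ e ≠ 0 ∧
      IsCoprime A' D' ∧ 2 ≤ A'.natDegree ∧ D' ≠ 0 := by
  obtain ⟨κ, hκ⟩ : ∃ κ, (Ap k A κ).coeff 3 ≠ 0 := by
    by_contra! hcon
    have hA : A = 0 := A_zero A (fun κ => by rw [← Ap_coeff (k := k)]; exact hcon κ)
    have hAp : ∀ κ, Ap k A κ = 0 := fun κ => by simp [Ap, f3, hA]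
    have hd : ∀ κ, (Dp k D κ) ≠ 0 ∧ (Dp k D κ).natDegree ≤ 1 := fun κ =>
      gcd_deg sm hH h (κ := κ) (e := Dp k D κ) (by rw [hAp]; exact dvd_zero _) dvd_rfl φ hφ hu
    have hD : D = 0 := D_zero D (fun κ => by
      rw [← Dp_coeff (k := k)]
      exact Polynomial.coeff_eq_zero_of_natDegree_lt (by have := (hd κ).2; omega))
    exact (hd 0).1 (by simp [Dp, f4, hD])
  classical
  have hA0 : Ap k A κ ≠ 0 := by rintro h0; rw [h0] at hκ; simp at hκ
  have h3 : 3 ≤ (Ap k A κ).natDegree := Polynomial.le_natDegree_of_ne_zero hκ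
  obtain ⟨he0, he1⟩ := gcd_deg sm hH h (κ := κ) (e := EuclideanDomain.gcd (Ap k A κ) (Dp k D κ))
    (EuclideanDomain.gcd_dvd_left _ _) (EuclideanDomain.gcd_dvd_right _ _) φ hφ hu
  obtain ⟨A', hA'⟩ := EuclideanDomain.gcd_dvd_left (Ap k A κ) (Dp k D κ)
  obtain ⟨D', hD'⟩ := EuclideanDomain.gcd_dvd_right (Ap k A κ) (Dp k D κ)
  have hb := EuclideanDomain.gcd_eq_gcd_ab (Ap k A κ) (Dp k D κ)
  generalize EuclideanDomain.gcd (Ap k A κ) (Dp k D κ) = e at *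
  have hA'0 : A' ≠ 0 := by rintro rfl; rw [mul_zero] at hA'; exact hA0 hA'
  have hdeg : 2 ≤ A'.natDegree := by
    have : (Ap k A κ).natDegree = e.natDegree + A'.natDegree := by
      rw [hA', Polynomial.natDegree_mul he0 hA'0]
    omega
  have hcop : IsCoprime A' D' := by
    refine ⟨EuclideanDomain.gcdA (Ap k A κ) (Dp k D κ),
      EuclideanDomain.gcdB (Ap k A κ) (Dp k D κ), ?_⟩
    apply mul_left_cancel₀ he0
    generalize EuclideanDomain.gcdA (Ap k A κ) (Dp k D κ) = a at *
    generalize EuclideanDomain.gcdB (Ap k A κ) (Dp k D κ) = b' at *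
    rw [hA', hD'] at hb
    linear_combination -hb
  refine ⟨κ, e, A', D', hA', hD', he0, hcop, hdeg, ?_⟩
  rintro rfl
  have := Polynomial.natDegree_eq_zero_of_isUnit (isCoprime_zero_right.mp hcop)
  omega
end kap
end DP2

namespace DP2
universe u
section alg
variable {k K L : Type u} [Field k] [Field K] [Algebra k K] [Field L] [Algebra k L] [Algebra K L]
  [IsScalarTower k K L]

lemma expand (u0 v0 : K) (u v x y δ α : L)
    (hu : u * δ = algebraMap K L u0 * δ - α * x) (hv : v * δ = algebraMap K L v0 * δ - α * y)
    (S : Subalgebra K L) (hx : x ∈ S) (hy : y ∈ S) (hδ : δ ∈ S) (hα : α ∈ S)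
    (f : MvPolynomial (Fin 2) k) :
    ∃ n : ℕ, ∃ R ∈ S, δ ^ (n + 1) * aeval ![u, v] f =
      δ ^ (n + 1) * algebraMap K L (aeval ![u0, v0] f) - δ ^ n * α *
        (x * algebraMap K L (aeval ![u0, v0] (pderiv 0 f)) +
         y * algebraMap K L (aeval ![u0, v0] (pderiv 1 f))) + α ^ 2 * R := by
  have hK : ∀ a : K, algebraMap K L a ∈ S := fun a => S.algebraMap_mem a
  induction f using MvPolynomial.induction_on with
  | C r => exact ⟨0, 0, S.zero_mem, by simp [← IsScalarTower.algebraMap_apply]⟩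
  | add f1 f2 h1 h2 =>
    obtain ⟨n, R, hR, h1⟩ := h1
    obtain ⟨m, T, hT, h2⟩ := h2
    refine ⟨n + m + 1, δ ^ (m + 1) * R + δ ^ (n + 1) * T, S.add_mem (S.mul_mem (S.pow_mem hδ _) hR)
      (S.mul_mem (S.pow_mem hδ _) hT), ?_⟩
    simp only [map_add]
    linear_combination δ ^ (m + 1) * h1 + δ ^ (n + 1) * h2
  | mul_X f i h =>
    obtain ⟨n, R, hR, h⟩ := h
    simp only [map_mul, aeval_X, Derivation.leibniz, pderiv_X, map_add, smul_eq_mul]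
    generalize aeval ![u0, v0] f = a at *
    generalize aeval ![u0, v0] (pderiv 0 f) = ax at *
    generalize aeval ![u0, v0] (pderiv 1 f) = ay at *
    generalize aeval ![u, v] f = a' at *
    fin_cases i
    · refine ⟨n + 1, R * (δ * algebraMap K L u0 - α * x) + δ ^ n *
        (x * algebraMap K L ax +
         y * algebraMap K L ay) * x, ?_, ?_⟩
      · exact S.add_mem (S.mul_mem hR (S.sub_mem (S.mul_mem hδ (hK _)) (S.mul_mem hα hx)))
          (S.mul_mem (S.mul_mem (S.pow_mem hδ _) (S.add_mem (S.mul_mem hx (hK _))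
            (S.mul_mem hy (hK _)))) hx)
      · simp
        linear_combination u * δ * h + (δ ^ (n + 1) * algebraMap K L a - δ ^ n * α *
          (x * algebraMap K L ax +
         y * algebraMap K L ay) + α ^ 2 * R) * hu
    · refine ⟨n + 1, R * (δ * algebraMap K L v0 - α * y) + δ ^ n *
        (x * algebraMap K L ax +
         y * algebraMap K L ay) * y, ?_, ?_⟩
      · exact S.add_mem (S.mul_mem hR (S.sub_mem (S.mul_mem hδ (hK _)) (S.mul_mem hα hy)))
          (S.mul_mem (S.mul_mem (S.pow_mem hδ _) (S.add_mem (S.mul_mem hx (hK _))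
            (S.mul_mem hy (hK _)))) hy)
      · simp
        linear_combination v * δ * h + (δ ^ (n + 1) * algebraMap K L a - δ ^ n * α *
          (x * algebraMap K L ax +
         y * algebraMap K L ay) + α ^ 2 * R) * hv

lemma contact (u0 v0 κ : K) (A' D' : Polynomial K) (hcop : IsCoprime A' D')
    (hA : 2 ≤ A'.natDegree) (τ : L) (hτ : Transcendental K τ) (u v : L)
    (hu : u * Polynomial.aeval τ D' =
      algebraMap K L u0 * Polynomial.aeval τ D' - Polynomial.aeval τ A' * τ)
    (hv : v * Polynomial.aeval τ D' =
      algebraMap K L v0 * Polynomial.aeval τ D' - Polynomial.aeval τ A' *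
        (algebraMap K L κ * τ + 1))
    (f : MvPolynomial (Fin 2) k) (hf : aeval ![u, v] f = 0) :
    aeval ![u0, v0] f = 0 ∧ aeval ![u0, v0] (pderiv 1 f) = 0 := by
  have hinj := transcendental_iff_injective.mp hτ
  have mem : ∀ p : Polynomial K, Polynomial.aeval τ p ∈ (Polynomial.aeval (R := K) τ).range :=
    fun p => ⟨p, rfl⟩
  obtain ⟨n, R, ⟨r, rfl⟩, h⟩ := expand u0 v0 u v τ (algebraMap K L κ * τ + 1) _ _ hu hv
    (Polynomial.aeval (R := K) τ).range ⟨Polynomial.X, by simp⟩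
    ⟨Polynomial.C κ * Polynomial.X + 1, by simp⟩ (mem D') (mem A') f
  rw [hf, mul_zero] at h
  generalize aeval ![u0, v0] f = a at *
  generalize aeval ![u0, v0] (pderiv 0 f) = ax at *
  generalize aeval ![u0, v0] (pderiv 1 f) = ay at *
  have h' : (0 : Polynomial K) = D' ^ (n + 1) * Polynomial.C a - D' ^ n * A' *
      (Polynomial.X * Polynomial.C ax + (Polynomial.C κ * Polynomial.X + 1) * Polynomial.C ay)
      + A' ^ 2 * r := by
    apply hinj
    simp at h ⊢
    linear_combination h
  have hA0 : A' ≠ 0 := by rintro rfl; simp at hA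
  have d1 : A' ∣ Polynomial.C a := by
    have : A' ∣ D' ^ (n + 1) * Polynomial.C a := by
      refine ⟨D' ^ n * (Polynomial.X * Polynomial.C ax +
        (Polynomial.C κ * Polynomial.X + 1) * Polynomial.C ay) - A' * r, ?_⟩
      linear_combination -h'
    exact (hcop.pow_right).dvd_of_dvd_mul_left this
  have ha : a = 0 := by
    by_contra hne
    have := Polynomial.natDegree_le_of_dvd d1 (by simpa using hne)
    rw [Polynomial.natDegree_C] at this
    omega
  refine ⟨ha, ?_⟩
  have e : Polynomial.X * Polynomial.C ax + (Polynomial.C κ * Polynomial.X + 1) * Polynomial.C ay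
     = Polynomial.C (ax + κ * ay) * Polynomial.X + Polynomial.C ay := by
    simp only [map_add, map_mul]; ring
  rw [e, ha] at h'
  have d2 : A' ∣ Polynomial.C (ax + κ * ay) * Polynomial.X + Polynomial.C ay := by
    have : A' ∣ D' ^ n * (Polynomial.C (ax + κ * ay) * Polynomial.X + Polynomial.C ay) := by
      refine ⟨r, ?_⟩
      apply mul_left_cancel₀ hA0
      rw [map_zero] at h'
      linear_combination h'
    exact (hcop.pow_right).dvd_of_dvd_mul_left this
  have hz : Polynomial.C (ax + κ * ay) * Polynomial.X + Polynomial.C ay = 0 := by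
    by_contra hne
    have := Polynomial.natDegree_le_of_dvd d2 hne
    have h2 : (Polynomial.C (ax + κ * ay) * Polynomial.X + Polynomial.C ay).natDegree ≤ 1 :=
      Polynomial.natDegree_linear_le
    omega
  have := congrArg (fun p => Polynomial.coeff p 0) hz
  simpa using this
end alg
end DP2

namespace DP2
universe u
section ind
variable {k K L : Type u} [Field k] [Field K] [Algebra k K] [Field L] [Algebra k L]

noncomputable def Phi (k : Type u) [Field k] :
    Polynomial (Polynomial k) →+* MvPolynomial (Fin 2) k :=
  Polynomial.eval₂RingHom (Polynomial.aeval (X 0 : MvPolynomial (Fin 2) k)).toRingHom (X 1)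

lemma Phi_surj (f : MvPolynomial (Fin 2) k) : ∃ m, Phi k m = f := by
  induction f using MvPolynomial.induction_on with
  | C r => exact ⟨Polynomial.C (Polynomial.C r), by simp [Phi]⟩
  | add f1 f2 h1 h2 =>
    obtain ⟨a, rfl⟩ := h1
    obtain ⟨b, rfl⟩ := h2
    exact ⟨a + b, map_add _ _ _⟩
  | mul_X f i h =>
    obtain ⟨a, rfl⟩ := h
    fin_cases i
    · exact ⟨a * Polynomial.C Polynomial.X, by rw [map_mul]; simp [Phi]⟩
    · exact ⟨a * Polynomial.X, by rw [map_mul]; simp [Phi]⟩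

lemma aeval_Phi {L : Type u} [CommRing L] [Algebra k L] (a b : L) (m : Polynomial (Polynomial k)) :
    aeval ![a, b] (Phi k m) = m.eval₂ (Polynomial.aeval a).toRingHom b := by
  have := Polynomial.hom_eval₂ m (Polynomial.aeval (X 0 : MvPolynomial (Fin 2) k)).toRingHom
    ((aeval ![a, b] : MvPolynomial (Fin 2) k →ₐ[k] L) : MvPolynomial (Fin 2) k →+* L) (X 1)
  simp only [Phi, Polynomial.coe_eval₂RingHom]
  refine this.trans ?_
  have e : ((aeval ![a, b] : MvPolynomial (Fin 2) k →ₐ[k] L) : MvPolynomial (Fin 2) k →+* L).comp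
     (Polynomial.aeval (X 0 : MvPolynomial (Fin 2) k)).toRingHom = (Polynomial.aeval (R := k) a).toRingHom := by
    apply Polynomial.ringHom_ext <;> intros <;> simp
  rw [e]; simp

lemma pderiv_Phi (m : Polynomial (Polynomial k)) :
    pderiv 1 (Phi k m) = Phi k (Polynomial.derivative m) := by
  have hc : ∀ c : Polynomial k, pderiv 1 (Polynomial.aeval (X 0 : MvPolynomial (Fin 2) k) c) = 0 := by
    intro c
    induction c using Polynomial.induction_on' with
    | add p q hp hq => simp [hp, hq]
    | monomial n a =>
      simp only [Polynomial.aeval_monomial, Derivation.leibniz, Derivation.leibniz_pow, pderiv_X]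
      simp [MvPolynomial.algebraMap_eq]
  induction m using Polynomial.induction_on' with
  | add p q hp hq => simp [hp, hq]
  | monomial n a =>
    simp only [Phi, Polynomial.coe_eval₂RingHom, Polynomial.eval₂_monomial,
      Polynomial.derivative_monomial, Derivation.leibniz, Derivation.leibniz_pow]
    simp [hc]
    ring

variable [Algebra (FractionRing (Polynomial k)) K] [IsScalarTower k (FractionRing (Polynomial k)) K]

lemma indep (u0 v0 : K)
    (hu0 : u0 = algebraMap (FractionRing (Polynomial k)) K
      (algebraMap (Polynomial k) (FractionRing (Polynomial k)) Polynomial.X))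
    (hsep : IsSeparable (FractionRing (Polynomial k)) v0) (u v : L)
    (hc : ∀ f : MvPolynomial (Fin 2) k, aeval ![u, v] f = 0 →
      aeval ![u0, v0] f = 0 ∧ aeval ![u0, v0] (pderiv 1 f) = 0) :
    AlgebraicIndependent k ![u, v] := by
  set F := FractionRing (Polynomial k)
  have hev : ∀ m : Polynomial (Polynomial k), aeval ![u0, v0] (Phi k m) =
      Polynomial.aeval v0 (m.map (algebraMap (Polynomial k) F)) := by
    intro m
    rw [aeval_Phi, Polynomial.aeval_def, Polynomial.eval₂_map]
    congr 1
    apply Polynomial.ringHom_ext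
    · intro a
      simp
      rw [IsScalarTower.algebraMap_apply k F K]
      rfl
    · simp [hu0]
      rfl
  have hFinj : Function.Injective (algebraMap (Polynomial k) F) := IsFractionRing.injective _ _
  set μ := minpoly F v0
  obtain ⟨b, hb, hbm⟩ := IsLocalization.integerNormalization_spec (nonZeroDivisors (Polynomial k)) μ
  set m := IsLocalization.integerNormalization (nonZeroDivisors (Polynomial k)) μ
  have hb0 : b ≠ 0 := nonZeroDivisors.ne_zero hb
  have hbm' : m.map (algebraMap (Polynomial k) F) = Polynomial.C (algebraMap _ F b) * μ := by
    rw [hbm]; ext; simp [Algebra.smul_def]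
  have hm1 : aeval ![u0, v0] (pderiv 1 (Phi k m)) ≠ 0 := by
    rw [pderiv_Phi, hev, ← Polynomial.derivative_map, hbm', Polynomial.derivative_C_mul]
    simp only [map_mul, Polynomial.aeval_C]
    apply mul_ne_zero
    · simpa using hb0
    · exact hsep.aeval_derivative_ne_zero (minpoly.aeval _ _)
  have hm0 : aeval ![u, v] (Phi k m) ≠ 0 := fun h => hm1 (hc _ h).2
  have key : ∀ n : ℕ, ∀ f : Polynomial (Polynomial k), f.natDegree ≤ n →
      aeval ![u, v] (Phi k f) = 0 → f = 0 := by
    intro n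
    induction n with
    | zero =>
      intro f hf h0
      by_contra hne
      have h1 := (hc _ h0).1
      rw [hev, Polynomial.eq_C_of_natDegree_le_zero hf] at h1
      simp at h1
      apply hne
      rw [Polynomial.eq_C_of_natDegree_le_zero hf, h1, map_zero]
    | succ n ih =>
      intro f hf h0
      by_contra hne
      have h1 := (hc _ h0).1
      rw [hev] at h1
      obtain ⟨h, hh⟩ := minpoly.dvd F v0 h1
      obtain ⟨b', hb', hbh⟩ := IsLocalization.integerNormalization_spec
        (nonZeroDivisors (Polynomial k)) h
      set h' := IsLocalization.integerNormalization (nonZeroDivisors (Polynomial k)) h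
      have hb'0 : b' ≠ 0 := nonZeroDivisors.ne_zero hb'
      have hbh' : h'.map (algebraMap (Polynomial k) F) = Polynomial.C (algebraMap _ F b') * h := by
        rw [hbh]; ext; simp [Algebra.smul_def]
      have eq : Polynomial.C (b * b') * f = m * h' := by
        apply Polynomial.map_injective _ hFinj
        rw [Polynomial.map_mul, Polynomial.map_mul, hbm', hbh', hh, Polynomial.map_C]
        simp only [map_mul]; ring
      have hh0 : h' ≠ 0 := by
        rintro h00
        rw [h00, mul_zero] at eq
        rcases mul_eq_zero.mp eq with e | e
        · rw [Polynomial.C_eq_zero] at e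
          exact mul_ne_zero hb0 hb'0 e
        · exact hne e
      have hmd : 1 ≤ m.natDegree := by
        rw [← Polynomial.natDegree_map_eq_of_injective hFinj, hbm', Polynomial.natDegree_C_mul
          (by simpa using hb0)]
        exact minpoly.natDegree_pos hsep.isIntegral
      have hm00 : m ≠ 0 := by rintro h; rw [h] at hmd; simp at hmd
      have hdeg : h'.natDegree ≤ n := by
        have := congrArg Polynomial.natDegree eq
        rw [Polynomial.natDegree_C_mul (mul_ne_zero hb0 hb'0), Polynomial.natDegree_mul hm00 hh0] at this
        omega
      have := congrArg (fun z => aeval ![u, v] (Phi k z)) eq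
      simp only [map_mul, h0, mul_zero] at this
      rcases mul_eq_zero.mp this.symm with e | e
      · exact hm0 e
      · exact hh0 (ih h' hdeg e)
  rw [algebraicIndependent_iff]
  intro f hf
  obtain ⟨m', rfl⟩ := Phi_surj f
  rw [key _ m' le_rfl hf, map_zero]
end ind
end DP2

namespace DP2
universe u
section sep
variable {k K : Type u} [Field k] [Field K] [Algebra k K] [Algebra (Polynomial k) K]
  [IsFractionRing (Polynomial k) K] [IsScalarTower k (Polynomial k) K]

lemma alg_eq (p : Polynomial k) : algebraMap (Polynomial k) K p =
    Polynomial.aeval (algebraMap (Polynomial k) K Polynomial.X) p := by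
  rw [Polynomial.aeval_algebraMap_apply, Polynomial.aeval_X_left_apply]

lemma t_trans : Transcendental k (algebraMap (Polynomial k) K Polynomial.X) := by
  rw [transcendental_iff]
  intro p hp
  rw [← alg_eq] at hp
  exact (IsFractionRing.injective (Polynomial k) K) (by simpa using hp)

/-- generic: t is a simple root -/
lemma simple_t (F : Type u) [Field F] [Algebra k F] [Algebra F K] [IsScalarTower k F K]
    (P0 P2 : Polynomial k)
    (hW : Polynomial.derivative P0 * P2 - P0 * Polynomial.derivative P2 ≠ 0) (a : F)
    (ha : algebraMap F K a = algebraMap _ K P0 / algebraMap _ K P2) :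
    ∃ Q : Polynomial F, Polynomial.aeval (algebraMap (Polynomial k) K Polynomial.X) Q = 0 ∧
      Polynomial.aeval (algebraMap (Polynomial k) K Polynomial.X) (Polynomial.derivative Q) ≠ 0 := by
  have h2 : algebraMap (Polynomial k) K P2 ≠ 0 := by
    intro h
    rw [map_eq_zero_iff _ (IsFractionRing.injective (Polynomial k) K)] at h
    simp [h] at hW
  refine ⟨P0.map (algebraMap k F) - Polynomial.C a * P2.map (algebraMap k F), ?_, ?_⟩
  · simp only [map_sub, map_mul, Polynomial.aeval_C, Polynomial.aeval_map_algebraMap, ← alg_eq, ha]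
    field_simp
    ring
  · simp only [Polynomial.derivative_map, Polynomial.derivative_C_mul, map_sub, map_mul, Polynomial.aeval_C, Polynomial.aeval_map_algebraMap, ← alg_eq, ha]
    intro h
    apply hW
    apply IsFractionRing.injective (Polynomial k) K
    field_simp at h
    simp only [map_sub, map_mul, map_zero]
    linear_combination h

lemma u_trans (P0 P2 : Polynomial k)
    (hW : Polynomial.derivative P0 * P2 - P0 * Polynomial.derivative P2 ≠ 0) :
    Transcendental k (algebraMap _ K P0 / algebraMap _ K P2) := by
  intro halg
  obtain ⟨Q, h1, h2⟩ := simple_t (K := K) (algebraicClosure k K) P0 P2 hW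
    ⟨_, mem_algebraicClosure_iff.mpr halg⟩ rfl
  have : IsAlgebraic (algebraicClosure k K) (algebraMap (Polynomial k) K Polynomial.X) :=
    ⟨Q, by rintro rfl; simp at h2, h1⟩
  exact t_trans (k := k) (K := K) (this.restrictScalars k)

lemma exists_alg (P0 P2 : Polynomial k)
    (hW : Polynomial.derivative P0 * P2 - P0 * Polynomial.derivative P2 ≠ 0) :
    ∃ (_ : Algebra (FractionRing (Polynomial k)) K)
      (_ : IsScalarTower k (FractionRing (Polynomial k)) K),
      algebraMap _ K P0 / algebraMap _ K P2 = algebraMap (FractionRing (Polynomial k)) K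
      (algebraMap (Polynomial k) (FractionRing (Polynomial k)) Polynomial.X) ∧
      ∀ v0 : K, IsSeparable (FractionRing (Polynomial k)) v0 := by
  have htr := u_trans (K := K) P0 P2 hW
  have hinj : Function.Injective
    (Polynomial.aeval (R := k) (algebraMap _ K P0 / algebraMap _ K P2)) :=
    transcendental_iff_injective.mp htr
  let i : FractionRing (Polynomial k) →ₐ[k] K := IsFractionRing.liftAlgHom hinj
  let _ : Algebra (FractionRing (Polynomial k)) K := i.toRingHom.toAlgebra
  have hmap : ∀ a, algebraMap (FractionRing (Polynomial k)) K a = i a := fun a => rfl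
  have : IsScalarTower k (FractionRing (Polynomial k)) K := IsScalarTower.of_algebraMap_eq
    (fun x => by rw [hmap, AlgHom.commutes])
  have hX : algebraMap _ K P0 / algebraMap _ K P2 = algebraMap (FractionRing (Polynomial k)) K
      (algebraMap (Polynomial k) (FractionRing (Polynomial k)) Polynomial.X) := by
    rw [hmap]
    simp [i]
  refine ⟨inferInstance, inferInstance, hX, ?_⟩
  obtain ⟨Q, h1, h2⟩ := simple_t (K := K) (FractionRing (Polynomial k)) P0 P2 hW _ hX.symm
  set t := algebraMap (Polynomial k) K Polynomial.X with ht
  have hsep : IsSeparable (FractionRing (Polynomial k)) t := by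
    have hint : IsIntegral (FractionRing (Polynomial k)) t :=
      IsAlgebraic.isIntegral ⟨Q, by rintro rfl; simp at h2, h1⟩
    unfold IsSeparable
    rw [Polynomial.separable_iff_derivative_ne_zero (minpoly.irreducible hint)]
    intro h0
    obtain ⟨R, hR⟩ := minpoly.dvd _ _ h1
    rw [hR, Polynomial.derivative_mul, h0] at h2
    simp at h2
  have htop : ∀ v0 : K, v0 ∈ IntermediateField.adjoin (FractionRing (Polynomial k)) {t} := by
    intro v0
    have hp : ∀ p : Polynomial k, algebraMap _ K p ∈
        IntermediateField.adjoin (FractionRing (Polynomial k)) {t} := by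
      intro p
      rw [alg_eq, ← Polynomial.aeval_map_algebraMap (FractionRing (Polynomial k))]
      exact IntermediateField.algebra_adjoin_le_adjoin _ _
        (Polynomial.aeval_mem_adjoin_singleton _ _)
    obtain ⟨a, b, -, rfl⟩ := IsFractionRing.div_surjective (A := Polynomial k) v0
    exact div_mem (hp a) (hp b)
  intro v0
  have := (IntermediateField.isSeparable_adjoin_simple_iff_isSeparable _ _).mpr hsep
  let z : IntermediateField.adjoin (FractionRing (Polynomial k)) {t} := ⟨v0, htop v0⟩
  have h3 := Algebra.IsSeparable.isSeparable (FractionRing (Polynomial k)) z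
  have e := minpoly.algebraMap_eq (A := FractionRing (Polynomial k)) (algebraMap
    (IntermediateField.adjoin (FractionRing (Polynomial k)) {t}) K).injective z
  unfold IsSeparable at h3 ⊢
  rw [← e] at h3
  exact h3
end sep
end DP2

namespace DP2
universe u
section main

lemma hom_scale {σ : Type*} [Fintype σ] {k S : Type*} [Field k] [CommRing S] [Algebra k S] {n : ℕ}
    (g : MvPolynomial σ k)
    (hg : g.IsHomogeneous n) (c : S) (x : σ → S) :
    aeval (fun i => c * x i) g = c ^ n * aeval x g := by
  rw [aeval_def, aeval_def, eval₂_eq', eval₂_eq', Finset.mul_sum]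
  apply Finset.sum_congr rfl
  intro d hd
  have h := hg (mem_support_iff.mp hd)
  have h' : ∑ i, d i = n := by
    rw [← h, Finsupp.weight_apply, Finsupp.sum_fintype _ _ (by simp)]
    simp
  simp only [mul_pow, Finset.prod_mul_distrib, Finset.prod_pow_eq_pow_sum, h']
  ring

lemma smooth_ext {k : Type u} [Field k] (g : MvPolynomial (Fin 3) k)
    (hB : ¬ ∃ P : Fin 3 → AlgebraicClosure k, P ≠ 0 ∧
        eval P (map (algebraMap k (AlgebraicClosure k)) g) = 0 ∧
        ∀ i : Fin 3, eval P (pderiv i (map (algebraMap k (AlgebraicClosure k)) g)) = 0)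
    (N : Type u) [Field N] [Algebra k N] (x : Fin 3 → N) (h0 : aeval x g = 0)
    (h1 : ∀ i, aeval x (pderiv i g) = 0) : x = 0 := by
  let I : Ideal (MvPolynomial (Fin 3) k) :=
    Ideal.span (Set.insert g (Set.range fun i => pderiv i g))
  have hX : ∀ i, (X i : MvPolynomial (Fin 3) k) ∈ I.radical := by
    intro i
    rw [← vanishingIdeal_zeroLocus_eq_radical (K := AlgebraicClosure k)]
    rw [mem_vanishingIdeal_iff]
    intro P hP
    rw [mem_zeroLocus_iff] at hP
    have hP0 : P = 0 := by
      by_contra hne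
      refine hB ⟨P, hne, ?_, fun j => ?_⟩
      · have := hP g (Ideal.subset_span (Set.mem_insert _ _))
        rwa [eval_map, ← aeval_def]
      · have := hP (pderiv j g) (Ideal.subset_span (Set.mem_insert_of_mem _ ⟨j, rfl⟩))
        rw [pderiv_map, eval_map, ← aeval_def]
        exact this
    simp [hP0]
  have hI : I ≤ RingHom.ker (aeval x : MvPolynomial (Fin 3) k →ₐ[k] N) := by
    apply Ideal.span_le.mpr
    rintro f (rfl | ⟨j, rfl⟩)
    · exact h0
    · exact h1 j
  funext i
  obtain ⟨n, hn⟩ := hX i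
  have := hI hn
  rw [RingHom.mem_ker, map_pow, aeval_X] at this
  exact pow_eq_zero_iff (M₀ := N) (n := n) (by rintro rfl; simp at this) |>.mp this

variable {k K : Type u} [Field k] [Field K] [Algebra k K] [Algebra (Polynomial k) K]
  [IsFractionRing (Polynomial k) K] [IsScalarTower k (Polynomial k) K]

open TrivSqZeroExt in
lemma exists_phi (N : Type u) [Field N] [Algebra K N] [Algebra k N] [IsScalarTower k K N]
    (P0 P2 : Polynomial k)
    (hW : Polynomial.derivative P0 * P2 - P0 * Polynomial.derivative P2 ≠ 0) :
    ∃ φ : K →ₐ[k] DualNumber N, (∀ a, (φ a).fst = algebraMap K N a) ∧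
      (φ (algebraMap _ K P0 / algebraMap _ K P2)).snd ≠ 0 := by
  let t : N := algebraMap K N (algebraMap (Polynomial k) K Polynomial.X)
  let ψ : Polynomial k →ₐ[k] DualNumber N := Polynomial.aeval (inl t + inr 1)
  have hψ : ∀ p, ψ p = inl (algebraMap K N (algebraMap _ K p)) +
      inr (algebraMap K N (algebraMap _ K (Polynomial.derivative p))) := by
    intro p
    have h2 : ∀ f : Polynomial k, Polynomial.aeval (inl t : DualNumber N) f
        = inl (algebraMap K N (algebraMap _ K f)) := by
      intro f
      have := Polynomial.aeval_algebraMap_apply (DualNumber N) t f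
      refine this.trans ?_
      rw [Polynomial.aeval_algebraMap_apply, ← alg_eq]
      rfl
    have h1 := Polynomial.aeval_add_of_sq_eq_zero (S := DualNumber N)
      (p.map (algebraMap k N)) (inl t) (inr 1) (by rw [pow_two, inr_mul_inr])
    simp only [Polynomial.derivative_map, Polynomial.aeval_map_algebraMap] at h1
    rw [h2, h2] at h1
    change Polynomial.aeval (inl t + inr 1) p = _
    rw [h1]
    ext
    · simp
    · simp; exact Algebra.algebraMap_eq_smul_one _
  have hne : ∀ p : Polynomial k, p ≠ 0 → algebraMap K N (algebraMap _ K p) ≠ 0 := by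
    intro p hp h
    rw [map_eq_zero, map_eq_zero_iff _ (IsFractionRing.injective (Polynomial k) K)] at h
    exact hp h
  have hunit : ∀ y : nonZeroDivisors (Polynomial k), IsUnit (ψ y) := by
    intro y
    rw [hψ, TrivSqZeroExt.isUnit_iff_isUnit_fst]
    simp only [fst_add, fst_inl, fst_inr, add_zero]
    exact (hne _ (nonZeroDivisors.ne_zero y.2)).isUnit
  let φ : K →ₐ[k] DualNumber N := IsLocalization.liftAlgHom (M := nonZeroDivisors (Polynomial k)) hunit
  have hφp : ∀ p, φ (algebraMap _ K p) = ψ p := fun p => by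
    simp [φ]
  have hfst : ∀ a, (φ a).fst = algebraMap K N a := by
    intro a
    obtain ⟨p, q, hq, rfl⟩ := IsFractionRing.div_surjective (A := Polynomial k) a
    have hq0 := hne q (nonZeroDivisors.ne_zero hq)
    have hq1 : algebraMap _ K q ≠ 0 := fun h => hq0 (by rw [h, map_zero])
    have e := congrArg φ (div_mul_cancel₀ (algebraMap _ K p) hq1)
    rw [map_mul, hφp, hφp, hψ, hψ] at e
    have := congrArg fst e
    simp only [fst_mul, fst_add, fst_inl, fst_inr, add_zero] at this
    rw [map_div₀ (algebraMap K N), eq_div_iff hq0, this]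
  refine ⟨φ, hfst, ?_⟩
  intro hs
  have hP2 : P2 ≠ 0 := by rintro rfl; simp at hW
  have hq0 := hne P2 hP2
  have hq1 : algebraMap _ K P2 ≠ 0 := fun h => hq0 (by rw [h, map_zero])
  have e := congrArg φ (div_mul_cancel₀ (algebraMap _ K P0) hq1)
  rw [map_mul, hφp, hφp, hψ, hψ] at e
  have := congrArg snd e
  simp only [snd_mul, fst_add, snd_add, snd_inl, fst_inl, fst_inr, snd_inr, add_zero, zero_add, hs, smul_eq_mul, op_smul_eq_smul,
    smul_zero, hfst, map_div₀, mul_zero] at this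
  field_simp at this
  apply hne _ hW
  simp only [map_sub, map_mul]
  linear_combination - this

lemma main_gen {L : Type u} [Field L] [Algebra k L] [Algebra K L] [IsScalarTower k K L] (τ : L)
    (hτ : Transcendental K τ) (hchar : (2 : k) ≠ 0)
    (g : MvPolynomial (Fin 3) k) (hg : g.IsHomogeneous 4)
    (hB : ¬ ∃ P : Fin 3 → AlgebraicClosure k, P ≠ 0 ∧
        eval P (map (algebraMap k (AlgebraicClosure k)) g) = 0 ∧
        ∀ i : Fin 3, eval P (pderiv i (map (algebraMap k (AlgebraicClosure k)) g)) = 0)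
    (P : Fin 3 → Polynomial k) (H : Polynomial k) (hH : H ≠ 0) (hPH : aeval P g = H ^ 2)
    (hW : Polynomial.derivative (P 0) * P 2 - P 0 * Polynomial.derivative (P 2) ≠ 0) :
    ∃ u v ω : L, AlgebraicIndependent k ![u, v] ∧ ω ^ 2 = aeval ![u, v, 1] g := by
  have hinj := IsFractionRing.injective (Polynomial k) K
  have hP2 : algebraMap _ K (P 2) ≠ 0 := by
    intro h
    rw [map_eq_zero_iff _ hinj] at h
    simp [h] at hW
  let π := algebraMap (Polynomial k) K
  have hne : ∀ p, p ≠ 0 → π p ≠ 0 := fun p hp h => hp ((map_eq_zero_iff _ hinj).mp h)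
  set u0 := algebraMap _ K (P 0) / algebraMap _ K (P 2)
  set v0 := algebraMap _ K (P 1) / algebraMap _ K (P 2)
  have hom : ∀ (S : Type u) [Field S] [Algebra k S] (c : S) (x : Fin 3 → S),
      aeval (fun i => c * x i) g = c ^ 4 * aeval x g := by
    intro S _ _ c x
    exact hom_scale g hg c x
  have hgH : aeval ![u0, v0, 1] g = (π H / π (P 2) ^ 2) ^ 2 := by
    have e : (![u0, v0, 1] : Fin 3 → K) = fun i => (π (P 2))⁻¹ * π (P i) := by
      funext i
      fin_cases i
      · simp [u0, π]; field_simp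
      · simp [v0, π]; field_simp
      · simp [π]; field_simp
    rw [e, hom]
    have : aeval (fun i => π (P i)) g = π (aeval P g) := by
      have h := MvPolynomial.aeval_algebraMap_apply (R := k) K P g
      exact h
    rw [this, hPH, map_pow]
    field_simp
  have h2K : (2 : K) ≠ 0 := by
    have := (map_ne_zero (algebraMap k K)).mpr hchar
    rwa [map_ofNat] at this
  have hHK : π H / π (P 2) ^ 2 ≠ 0 := div_ne_zero (hne _ hH) (pow_ne_zero _ hP2)
  obtain ⟨b, c, A, D, hMI⟩ := exists_MI h2K g hg u0 v0 _ hHK hgH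
  obtain ⟨φ, hφ, hsnd⟩ := exists_phi (K := K) (AlgebraicClosure K) (P 0) (P 2) hW
  have : Infinite K := Infinite.of_injective _ hinj
  obtain ⟨κ, e, A', D', hA', hD', he, hcop, hdeg, hD0⟩ :=
    choose_kappa (N := AlgebraicClosure K) (smooth_ext g hB _) hHK hMI φ hφ hsnd
  have hinjτ := transcendental_iff_injective.mp hτ
  have hneτ : ∀ p : Polynomial K, p ≠ 0 → Polynomial.aeval τ p ≠ 0 := fun p hp h =>
    hp (hinjτ (by simpa using h))
  have hA0 : A' ≠ 0 := by rintro rfl; simp at hdeg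
  set α := Polynomial.aeval τ A' with hα
  set δ := Polynomial.aeval τ D' with hδ
  have hα0 : α ≠ 0 := hneτ _ hA0
  have hδ0 : δ ≠ 0 := hneτ _ hD0
  obtain ⟨instA, instT, hX, hsep⟩ := exists_alg (K := K) (P 0) (P 2) hW
  set x := τ
  set y := algebraMap K L κ * τ + 1
  refine ⟨algebraMap K L u0 - α / δ * x, algebraMap K L v0 - α / δ * y,
    q2 (IsScalarTower.toAlgHom k K L) (π H / π (P 2) ^ 2) b c x y (- δ / α) / (- δ / α) ^ 2, ?_, ?_⟩
  · apply indep u0 v0 hX (hsep v0)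
    intro f hf
    exact contact u0 v0 κ A' D' hcop hdeg τ hτ _ _ (by rw [← hα, ← hδ]; field_simp; rfl)
      (by rw [← hα, ← hδ]; field_simp; rfl) f hf
  · have h := hMI L (IsScalarTower.toAlgHom k K L) x y (- δ / α)
    have eA : f3 (IsScalarTower.toAlgHom k K L) A x y = Polynomial.aeval τ e * α := by
      rw [hα, ← map_mul, ← hA']
      exact (eval_Ap (IsScalarTower.toAlgHom k K L) A κ x).symm
    have eD : f4 (IsScalarTower.toAlgHom k K L) D x y = Polynomial.aeval τ e * δ := by
      rw [hδ, ← map_mul, ← hD']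
      exact (eval_Dp (IsScalarTower.toAlgHom k K L) D κ x).symm
    rw [eA, eD] at h
    have hm : (- δ / α) ≠ 0 := div_ne_zero (neg_ne_zero.mpr hδ0) hα0
    have e1 : (![algebraMap K L u0 - α / δ * x, algebraMap K L v0 - α / δ * y, 1] : Fin 3 → L) =
      fun i => (- δ / α)⁻¹ * (![IsScalarTower.toAlgHom k K L u0 * (- δ / α) + x,
        IsScalarTower.toAlgHom k K L v0 * (- δ / α) + y, - δ / α] : Fin 3 → L) i := by
      funext i
      fin_cases i
      · simp; field_simp; ring
      · simp; field_simp; ring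
      · simp; field_simp
    rw [e1, hom, h]
    field_simp
    ring
end main
end DP2

namespace DP2
universe u
section conc
variable {k : Type u} [Field k]

lemma Phi_inj : Function.Injective (Phi k) := by
  have : ∀ m : Polynomial (Polynomial k),
      aeval (![Polynomial.C Polynomial.X, Polynomial.X] : Fin 2 → Polynomial (Polynomial k)) (Phi k m) = m := by
    intro m
    rw [aeval_Phi]
    have e : (Polynomial.aeval (R := k) (Polynomial.C Polynomial.X :
        Polynomial (Polynomial k))).toRingHom = Polynomial.C := by
      apply Polynomial.ringHom_ext
      · intro a; simp
      · simp
    rw [e, Polynomial.eval₂_C_X]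
  exact Function.LeftInverse.injective (g := fun f => aeval (![Polynomial.C Polynomial.X, Polynomial.X] : Fin 2 → Polynomial (Polynomial k)) f) this

lemma main_W02 (hchar : (2 : k) ≠ 0)
    (g : MvPolynomial (Fin 3) k) (hg : g.IsHomogeneous 4)
    (hB : ¬ ∃ P : Fin 3 → AlgebraicClosure k, P ≠ 0 ∧
        eval P (map (algebraMap k (AlgebraicClosure k)) g) = 0 ∧
        ∀ i : Fin 3, eval P (pderiv i (map (algebraMap k (AlgebraicClosure k)) g)) = 0)
    (P : Fin 3 → Polynomial k) (H : Polynomial k) (hH : H ≠ 0) (hPH : aeval P g = H ^ 2)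
    (hW : Polynomial.derivative (P 0) * P 2 - P 0 * Polynomial.derivative (P 2) ≠ 0) :
    ∃ u v ω : FractionRing (MvPolynomial (Fin 2) k),
      AlgebraicIndependent k ![u, v] ∧ ω ^ 2 = aeval ![u, v, 1] g := by
  let R := MvPolynomial (Fin 2) k
  let L := FractionRing R
  let j : Polynomial k →ₐ[k] L :=
    (IsScalarTower.toAlgHom k R L).comp (Polynomial.aeval (X 0 : MvPolynomial (Fin 2) k))
  have hRL : Function.Injective (algebraMap R L) := IsFractionRing.injective R L
  have hPhi : ∀ m : Polynomial (Polynomial k), m.eval₂ j.toRingHom (algebraMap R L (X 1)) =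
      algebraMap R L (Phi k m) := by
    intro m
    exact (Polynomial.hom_eval₂ m _ (algebraMap R L) (X 1)).symm
  have hj : Function.Injective j := by
    rw [injective_iff_map_eq_zero]
    intro p hp
    have := hPhi (Polynomial.C p)
    rw [Polynomial.eval₂_C] at this
    have h2 : j p = algebraMap R L (Phi k (Polynomial.C p)) := this
    rw [hp, eq_comm, map_eq_zero_iff _ hRL, map_eq_zero_iff _ Phi_inj] at h2
    simpa using h2
  let K := FractionRing (Polynomial k)
  let i : K →ₐ[k] L := IsFractionRing.liftAlgHom hj
  let instKL : Algebra K L := i.toRingHom.toAlgebra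
  let instPL : Algebra (Polynomial k) L := j.toRingHom.toAlgebra
  have h1 : IsScalarTower k K L := IsScalarTower.of_algebraMap_eq (fun x => (i.commutes x).symm)
  have h2 : IsScalarTower (Polynomial k) K L := IsScalarTower.of_algebraMap_eq (fun x => by
    change j x = i (algebraMap _ K x)
    simp [i])
  have hτ : Transcendental K (algebraMap R L (X 1)) := by
    unfold Transcendental
    rw [← IsFractionRing.isAlgebraic_iff (Polynomial k) K L]
    rintro ⟨m, hm, hm0⟩
    apply hm
    apply Phi_inj
    rw [map_zero]
    apply hRL
    rw [map_zero, ← hPhi, ← hm0]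
    rfl
  exact main_gen (K := K) (L := L) _ hτ hchar g hg hB P H hH hPH hW

lemma smooth_perm (σ : Equiv.Perm (Fin 3)) (g : MvPolynomial (Fin 3) k)
    (hB : ¬ ∃ P : Fin 3 → AlgebraicClosure k, P ≠ 0 ∧
        eval P (map (algebraMap k (AlgebraicClosure k)) g) = 0 ∧
        ∀ i : Fin 3, eval P (pderiv i (map (algebraMap k (AlgebraicClosure k)) g)) = 0) :
    ¬ ∃ P : Fin 3 → AlgebraicClosure k, P ≠ 0 ∧
        eval P (map (algebraMap k (AlgebraicClosure k)) (rename σ g)) = 0 ∧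
        ∀ i : Fin 3, eval P (pderiv i (map (algebraMap k (AlgebraicClosure k)) (rename σ g))) = 0 := by
  rintro ⟨P, h0, h1, h2⟩
  refine hB ⟨P ∘ σ, ?_, ?_, ?_⟩
  · intro h
    apply h0
    funext i
    have := congrFun h (σ.symm i)
    simpa using this
  · rwa [map_rename, eval_rename] at h1
  · intro i
    have := h2 (σ i)
    rwa [map_rename, pderiv_rename σ.injective, eval_rename] at this

lemma indep_inv {L : Type u} [Field L] [Algebra k L] (u v : L) (h : AlgebraicIndependent k ![u, v]) :
    v ≠ 0 ∧ AlgebraicIndependent k ![u / v, 1 / v] := by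
  have hv : v ≠ 0 := h.ne_zero 1
  refine ⟨hv, ?_⟩
  rw [algebraicIndependent_iff] at h ⊢
  intro f hf
  let N := f.totalDegree
  let e : (Fin 2 →₀ ℕ) → (Fin 2 →₀ ℕ) := fun d =>
    Finsupp.single 0 (d 0) + Finsupp.single 1 (N - d 0 - d 1)
  have he0 : ∀ d, e d 0 = d 0 := fun d => by simp [e]
  have he1 : ∀ d, e d 1 = N - d 0 - d 1 := fun d => by simp [e]
  have hdeg : ∀ d ∈ f.support, d 0 + d 1 ≤ N := by
    intro d hd
    have := le_totalDegree hd
    rwa [Finsupp.sum_fintype _ _ (by simp), Fin.sum_univ_two] at this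
  have hinj : ∀ d ∈ f.support, ∀ d' ∈ f.support, e d = e d' → d = d' := by
    intro d hd d' hd' hee
    have a0 := DFunLike.congr_fun hee 0
    have a1 := DFunLike.congr_fun hee 1
    rw [he0, he0] at a0
    rw [he1, he1] at a1
    have := hdeg d hd
    have := hdeg d' hd'
    ext i
    fin_cases i
    · exact a0
    · simp; omega
  let q : MvPolynomial (Fin 2) k := ∑ d ∈ f.support, monomial (e d) (f.coeff d)
  have hq : aeval ![u, v] q = 0 := by
    have : aeval ![u, v] q = v ^ N * aeval ![u / v, 1 / v] f := by
      rw [aeval_def _ f, eval₂_eq', Finset.mul_sum, map_sum]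
      apply Finset.sum_congr rfl
      intro d hd
      rw [aeval_monomial, Finsupp.prod_fintype _ _ (by simp), Fin.prod_univ_two, Fin.prod_univ_two,
        he0, he1]
      have h3 := hdeg d hd
      obtain ⟨c, hc⟩ := Nat.exists_eq_add_of_le h3
      rw [hc, show d 0 + d 1 + c - d 0 - d 1 = c by omega]
      simp only [Matrix.cons_val_zero, Matrix.cons_val_one, div_pow, one_pow, pow_add]
      field_simp
    rw [this, hf, mul_zero]
  have hq0 := h q hq
  ext d
  rw [coeff_zero]
  by_contra hne
  have hd : d ∈ f.support := mem_support_iff.mpr hne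
  have := congrArg (coeff (e d)) hq0
  simp only [q, coeff_sum, coeff_monomial, coeff_zero] at this
  rw [Finset.sum_eq_single d] at this
  · simp at this; exact hne this
  · intro b hb hbd
    rw [if_neg]
    intro hh; exact hbd (hinj b hb d hd hh)
  · intro h; exact absurd hd h

lemma main_W (hchar : (2 : k) ≠ 0)
    (g : MvPolynomial (Fin 3) k) (hg : g.IsHomogeneous 4)
    (hB : ¬ ∃ P : Fin 3 → AlgebraicClosure k, P ≠ 0 ∧
        eval P (map (algebraMap k (AlgebraicClosure k)) g) = 0 ∧
        ∀ i : Fin 3, eval P (pderiv i (map (algebraMap k (AlgebraicClosure k)) g)) = 0)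
    (P : Fin 3 → Polynomial k) (H : Polynomial k) (hH : H ≠ 0) (hPH : aeval P g = H ^ 2)
    (hW : ∃ i j, Polynomial.derivative (P i) * P j - P i * Polynomial.derivative (P j) ≠ 0) :
    ∃ u v ω : FractionRing (MvPolynomial (Fin 2) k),
      AlgebraicIndependent k ![u, v] ∧ ω ^ 2 = aeval ![u, v, 1] g := by
  have case02 := main_W02 hchar g hg hB P H hH hPH
  have red : ∀ σ : Equiv.Perm (Fin 3), (∀ i, σ (σ i) = i) →
    Polynomial.derivative (P (σ 0)) * P (σ 2) - P (σ 0) * Polynomial.derivative (P (σ 2)) ≠ 0 →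
    ∃ u v ω : FractionRing (MvPolynomial (Fin 2) k),
      AlgebraicIndependent k ![u, v] ∧ ω ^ 2 = aeval (![u, v, 1] ∘ σ) g := by
    intro σ hσ h
    obtain ⟨u, v, ω, h1, h2⟩ := main_W02 hchar (rename σ g) (hg.rename_isHomogeneous)
      (smooth_perm σ g hB) (P ∘ σ) H hH (by
        rw [aeval_rename, ← hPH]
        congr 2
        funext i; simp [hσ]) h
    refine ⟨u, v, ω, h1, ?_⟩
    rw [h2, aeval_rename]
  have case12 : Polynomial.derivative (P 1) * P 2 - P 1 * Polynomial.derivative (P 2) ≠ 0 →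
     ∃ u v ω : FractionRing (MvPolynomial (Fin 2) k),
      AlgebraicIndependent k ![u, v] ∧ ω ^ 2 = aeval ![u, v, 1] g := by
    intro h
    obtain ⟨u, v, ω, h1, h2⟩ := red (Equiv.swap 0 1) (by decide) h
    refine ⟨v, u, ω, ?_, ?_⟩
    · have := h1.comp (Equiv.swap 0 1 : Equiv.Perm (Fin 2)) (Equiv.injective _)
      convert this using 1
      funext i; fin_cases i <;> simp
    · rw [h2]; congr 2
      funext i; fin_cases i <;> simp <;> rfl
  have case01 : Polynomial.derivative (P 0) * P 1 - P 0 * Polynomial.derivative (P 1) ≠ 0 →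
     ∃ u v ω : FractionRing (MvPolynomial (Fin 2) k),
      AlgebraicIndependent k ![u, v] ∧ ω ^ 2 = aeval ![u, v, 1] g := by
    intro h
    obtain ⟨u, v, ω, h1, h2⟩ := red (Equiv.swap 1 2) (by decide) h
    obtain ⟨hv, h3⟩ := indep_inv u v h1
    refine ⟨u / v, 1 / v, ω / v ^ 2, h3, ?_⟩
    have e : (![u / v, 1 / v, 1] : Fin 3 → FractionRing (MvPolynomial (Fin 2) k)) =
       fun i => v⁻¹ * (![u, v, 1] ∘ Equiv.swap 1 2) i := by
      funext i
      fin_cases i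
      · simp [Equiv.swap_apply_def]; field_simp
      · simp
      · simp [hv]
    rw [e, hom_scale g hg, ← h2]
    field_simp
  obtain ⟨i, j, hij⟩ := hW
  have sw : ∀ i j, Polynomial.derivative (P i) * P j - P i * Polynomial.derivative (P j) ≠ 0 →
    Polynomial.derivative (P j) * P i - P j * Polynomial.derivative (P i) ≠ 0 := by
    intro i j h h'
    apply h; linear_combination - h'
  fin_cases i <;> fin_cases j
  · exact absurd (by simp; ring) hij
  · exact case01 hij
  · exact case02 hij
  · exact case01 (sw _ _ hij)
  · exact absurd (by simp; ring) hij
  · exact case12 hij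
  · exact case02 (sw _ _ hij)
  · exact case12 (sw _ _ hij)
  · exact absurd (by simp; ring) hij
end conc
end DP2

namespace DP2
universe u
section sep
variable {k : Type u} [Field k]

lemma not_all_const (P : Fin 3 → Polynomial k)
    (hI : ∃ i j, ∀ a b : k, Polynomial.C a * P i = Polynomial.C b * P j → a = 0 ∧ b = 0) :
    ∃ i, (P i).natDegree ≠ 0 := by
  by_contra! h
  obtain ⟨i, j, hij⟩ := hI
  obtain ⟨x, hx⟩ := Polynomial.natDegree_eq_zero.mp (h i)
  obtain ⟨y, hy⟩ := Polynomial.natDegree_eq_zero.mp (h j)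
  rw [← hx, ← hy] at hij
  obtain ⟨h1, h2⟩ := hij y x (by ring)
  subst h1 h2
  have := (hij 1 0 (by simp)).1
  exact one_ne_zero this

lemma sep_red (hchar : (2 : k) ≠ 0)
    (g : MvPolynomial (Fin 3) k) (hg : g.IsHomogeneous 4) (n : ℕ) :
    ∀ (P : Fin 3 → Polynomial k) (H : Polynomial k), ∑ i, (P i).natDegree = n →
    H ≠ 0 → aeval P g = H ^ 2 →
    (∃ i j, ∀ a b : k, Polynomial.C a * P i = Polynomial.C b * P j → a = 0 ∧ b = 0) →
    ∃ (P' : Fin 3 → Polynomial k) (H' : Polynomial k), H' ≠ 0 ∧ aeval P' g = H' ^ 2 ∧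
     ∃ i j, Polynomial.derivative (P' i) * P' j - P' i * Polynomial.derivative (P' j) ≠ 0 := by
  induction n using Nat.strong_induction_on with
  | _ n ih =>
  intro P H hn hH hPH hI
  by_cases hW : ∃ i j, Polynomial.derivative (P i) * P j - P i * Polynomial.derivative (P j) ≠ 0
  · exact ⟨P, H, hH, hPH, hW⟩
  push Not at hW
  obtain ⟨i₀, hi₀⟩ := not_all_const P hI
  by_cases hc : ∃ h : Polynomial k, h.natDegree ≠ 0 ∧ ∀ i, h ∣ P i
  · obtain ⟨h, hh, hdiv⟩ := hc
    have hh0 : h ≠ 0 := by rintro rfl; simp at hh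
    choose P' hP' using hdiv
    have hPe : P = fun i => h * P' i := funext hP'
    have hd : h ^ 2 ∣ H := by
      apply (IsIntegrallyClosed.pow_dvd_pow_iff (two_ne_zero)).mp; rw [← hPH, hPe, hom_scale g hg]
      exact ⟨aeval P' g, by ring⟩
    obtain ⟨H', rfl⟩ := hd
    have hdeg : ∀ i, P i ≠ 0 → (P' i).natDegree < (P i).natDegree := by
      intro i hi
      rw [hP' i] at hi ⊢
      rw [Polynomial.natDegree_mul hh0 (right_ne_zero_of_mul hi)]
      omega
    have hdeg' : ∀ i, (P' i).natDegree ≤ (P i).natDegree := by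
      intro i
      by_cases hi : P i = 0
      · have : P' i = 0 := by
          rw [hP' i] at hi
          exact (mul_eq_zero.mp hi).resolve_left hh0
        simp [this]
      · exact (hdeg i hi).le
    refine ih (∑ i, (P' i).natDegree) ?_ P' H' rfl (right_ne_zero_of_mul hH) ?_ ?_
    · rw [← hn]
      apply Finset.sum_lt_sum (fun i _ => hdeg' i)
      refine ⟨i₀, Finset.mem_univ _, hdeg i₀ ?_⟩
      intro h0; rw [h0] at hi₀; simp at hi₀
    · rw [hPe, hom_scale g hg] at hPH
      apply mul_left_cancel₀ (pow_ne_zero 4 hh0)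
      rw [hPH]; ring
    · obtain ⟨i, j, hij⟩ := hI
      refine ⟨i, j, fun a b hab => hij a b ?_⟩
      rw [hP' i, hP' j]
      linear_combination h * hab
  · push Not at hc
    have hspan : (1 : Polynomial k) ∈ Ideal.span (Set.range P) := by
      obtain ⟨h, hh⟩ := (IsPrincipalIdealRing.principal (Ideal.span (Set.range P))).principal
      have hh' : Ideal.span (Set.range P) = Ideal.span {h} := hh
      have hdiv : ∀ i, h ∣ P i := by
        intro i
        rw [← Ideal.mem_span_singleton, ← hh']
        exact Ideal.subset_span ⟨i, rfl⟩
      have h0 : h.natDegree = 0 := by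
        by_contra hne
        obtain ⟨i, hi⟩ := hc h hne
        exact hi (hdiv i)
      obtain ⟨x, hx⟩ := Polynomial.natDegree_eq_zero.mp h0
      have hx0 : x ≠ 0 := by
        rintro rfl
        have := hdiv i₀
        rw [← hx, map_zero, zero_dvd_iff] at this
        rw [this] at hi₀; simp at hi₀
      rw [hh', Ideal.mem_span_singleton, ← hx]
      exact ⟨Polynomial.C x⁻¹, by rw [← Polynomial.C_mul, mul_inv_cancel₀ hx0, Polynomial.C_1]⟩
    have hD : ∀ i, Polynomial.derivative (P i) = 0 := by
      intro i
      have key : ∀ x ∈ Ideal.span (Set.range P), P i ∣ Polynomial.derivative (P i) * x := by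
        intro x hx
        induction hx using Submodule.span_induction with
        | mem x hx =>
          obtain ⟨j, rfl⟩ := hx
          exact ⟨Polynomial.derivative (P j), by linear_combination hW i j⟩
        | zero => simp
        | add x y _ _ h1 h2 => rw [mul_add]; exact dvd_add h1 h2
        | smul a x _ h1 =>
          rw [smul_eq_mul, mul_left_comm]; exact Dvd.dvd.mul_left h1 a
      have h1 := key 1 hspan
      rw [mul_one] at h1
      by_cases hi : P i = 0
      · simp [hi]
      · exact Polynomial.eq_zero_of_dvd_of_degree_lt h1 (Polynomial.degree_derivative_lt hi)
    obtain ⟨p, hp⟩ := CharP.exists k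
    rcases CharP.char_is_prime_or_zero k p with hpp | hp0
    · have hp1 : p ≠ 0 := hpp.ne_zero
      have hex := fun i => Polynomial.expand_contract p (hD i) hp1
      have hPe : P = fun i => Polynomial.expand k p (Polynomial.contract p (P i)) :=
        funext fun i => (hex i).symm
      have hae : aeval P g = Polynomial.expand k p (aeval (fun i => Polynomial.contract p (P i)) g) := by
        conv_lhs => rw [hPe]
        rw [← comp_aeval_apply]
      have hdH : Polynomial.derivative H = 0 := by
        have h1 := congrArg Polynomial.derivative hPH
        rw [hae, Polynomial.derivative_expand, Polynomial.derivative_pow] at h1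
        have hpz : (p : Polynomial k) = 0 := by
          rw [← Polynomial.C_eq_natCast, CharP.cast_eq_zero, Polynomial.C_0]
        rw [hpz] at h1
        have h2 : (Polynomial.C 2 : Polynomial k) * H * Polynomial.derivative H = 0 := by
          simp at h1 ⊢
          tauto
        rcases mul_eq_zero.mp h2 with h3 | h3
        · rcases mul_eq_zero.mp h3 with h4 | h4
          · exact absurd (Polynomial.C_eq_zero.mp h4) hchar
          · exact absurd h4 hH
        · exact h3
      have hHe := Polynomial.expand_contract p hdH hp1
      refine ih (∑ i, (Polynomial.contract p (P i)).natDegree) ?_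
        (fun i => Polynomial.contract p (P i)) (Polynomial.contract p H) rfl ?_ ?_ ?_
      · rw [← hn]
        have hdeg : ∀ i, (P i).natDegree = (Polynomial.contract p (P i)).natDegree * p := by
          intro i
          conv_lhs => rw [← hex i]
          rw [Polynomial.natDegree_expand]
        apply Finset.sum_lt_sum
        · intro i _
          rw [hdeg i]
          exact Nat.le_mul_of_pos_right _ hpp.pos
        · refine ⟨i₀, Finset.mem_univ _, ?_⟩
          have h1 := hdeg i₀
          rw [h1] at hi₀
          rw [h1]
          have h2 := hpp.two_le
          have h3 : 0 < (Polynomial.contract p (P i₀)).natDegree :=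
            Nat.pos_of_ne_zero (left_ne_zero_of_mul hi₀)
          nlinarith
      · intro h0; rw [h0] at hHe; simp at hHe; exact hH hHe.symm
      · apply Polynomial.expand_injective hpp.pos
        rw [← hae, hPH, map_pow, hHe]
      · obtain ⟨i, j, hij⟩ := hI
        refine ⟨i, j, fun a b hab => hij a b ?_⟩
        have := congrArg (Polynomial.expand k p) hab
        simpa [hex] using this
    · subst hp0
      have : CharZero k := CharP.charP_to_charZero k
      exact absurd (Polynomial.derivative_eq_zero.mp (hD i₀)) hi₀
end sep
end DP2

namespace DP2
universe u
section hom
variable {k : Type u} [Field k]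

lemma sqrt_descent_aux {k' : Type u} [Field k'] [Algebra k k'] (hchar : (2 : k) ≠ 0)
    (F : Polynomial k) (H : Polynomial k') (hF : F.map (algebraMap k k') = H ^ 2)
    (c : k) (hc : c ≠ 0) (h0 : H.coeff 0 = algebraMap k k' c) :
    ∃ H' : Polynomial k, F = H' ^ 2 := by
  have hinj : Function.Injective (algebraMap k k') := (algebraMap k k').injective
  have key : ∀ n, H.coeff n ∈ (algebraMap k k').fieldRange := by
    intro n
    induction n using Nat.strong_induction_on with
    | _ n ih =>
    rcases Nat.eq_zero_or_pos n with rfl | hn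
    · rw [h0]; exact ⟨c, rfl⟩
    · have h1 := congrArg (fun f => Polynomial.coeff f n) hF
      simp only [Polynomial.coeff_map, sq, Polynomial.coeff_mul] at h1
      rw [← Finset.add_sum_erase _ _ (show (0, n) ∈ Finset.HasAntidiagonal.antidiagonal n by simp),
        ← Finset.add_sum_erase _ _ (show (n, 0) ∈ (Finset.HasAntidiagonal.antidiagonal n).erase (0, n) by
          simp; omega)] at h1
      set R := ∑ x ∈ ((Finset.HasAntidiagonal.antidiagonal n).erase (0, n)).erase (n, 0), H.coeff x.1 * H.coeff x.2
        with hR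
      have hRm : R ∈ (algebraMap k k').fieldRange := by
        apply sum_mem
        rintro ⟨i, j⟩ hx
        simp only [Finset.mem_erase, Finset.HasAntidiagonal.mem_antidiagonal, ne_eq, Prod.mk.injEq] at hx
        exact mul_mem (ih i (by omega)) (ih j (by omega))
      have h2c : algebraMap k k' (2 * c) ≠ 0 := by
        rw [map_ne_zero]; exact mul_ne_zero hchar hc
      have : H.coeff n = (algebraMap k k' (F.coeff n) - R) / algebraMap k k' (2 * c) := by
        rw [eq_div_iff h2c, h1, h0, map_mul, map_ofNat]
        dsimp only
        ring
      rw [this]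
      exact div_mem (sub_mem ⟨_, rfl⟩ hRm) ⟨_, rfl⟩
  have hl : H ∈ Polynomial.lifts (algebraMap k k') := by
    rw [Polynomial.lifts_iff_coeff_lifts]
    intro n
    exact key n
  obtain ⟨H', hH'⟩ := (Polynomial.mem_lifts _).mp hl
  refine ⟨H', ?_⟩
  apply Polynomial.map_injective _ hinj
  rw [hF, Polynomial.map_pow, hH']

lemma sqrt_descent {k' : Type u} [Field k'] [Algebra k k'] (hchar : (2 : k) ≠ 0)
    (F : Polynomial k) (H : Polynomial k') (hF : F.map (algebraMap k k') = H ^ 2)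
    (c : k) (hc : c ≠ 0) (h0 : F.coeff 0 = c ^ 2) :
    ∃ H' : Polynomial k, F = H' ^ 2 := by
  have h1 := congrArg (fun f => Polynomial.coeff f 0) hF
  simp only [Polynomial.coeff_map, sq, Polynomial.mul_coeff_zero, h0, map_mul] at h1
  rcases mul_self_eq_mul_self_iff.mp h1.symm with h | h
  · exact sqrt_descent_aux hchar F H hF c hc h
  · exact sqrt_descent_aux hchar F (-H) (by rw [hF]; ring) c hc (by rw [Polynomial.coeff_neg, h]; ring)

noncomputable def line (s0 t0 s1 t1 : k) : Fin 2 → Polynomial k :=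
  ![Polynomial.C s0 + Polynomial.X * Polynomial.C s1, Polynomial.C t0 + Polynomial.X * Polynomial.C t1]

lemma line_inj {K : Type u} [Field K] [Algebra (MvPolynomial (Fin 2) k) K] [Algebra k K]
    [IsScalarTower k (MvPolynomial (Fin 2) k) K]
    (hK : Function.Injective (algebraMap (MvPolynomial (Fin 2) k) K)) (s0 t0 s1 t1 : k)
    (c T : K) (e0 : c * (algebraMap k K s0 + T * algebraMap k K s1) = algebraMap _ K (X 0 : MvPolynomial (Fin 2) k))
    (e1 : c * (algebraMap k K t0 + T * algebraMap k K t1) = algebraMap _ K (X 1 : MvPolynomial (Fin 2) k))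
    (d : ℕ) (p : MvPolynomial (Fin 2) k) (hp : p.IsHomogeneous d)
    (h : aeval (line s0 t0 s1 t1) p = 0) : p = 0 := by
  apply hK
  have h1 := congrArg (Polynomial.aeval T) h
  rw [map_zero, comp_aeval_apply] at h1
  have h2 := hom_scale p hp c (fun i => (Polynomial.aeval T) (line s0 t0 s1 t1 i))
  rw [h1, mul_zero] at h2
  rw [map_zero, ← h2]
  have : (fun i => c * (Polynomial.aeval T) (line s0 t0 s1 t1 i)) =
      fun i => algebraMap (MvPolynomial (Fin 2) k) K (X i) := by
    funext i
    fin_cases i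
    · simpa [line, mul_comm T] using e0
    · simpa [line, mul_comm T] using e1
  rw [this]
  have h3 := MvPolynomial.aeval_algebraMap_apply (R := k) K (X : Fin 2 → MvPolynomial (Fin 2) k) p
  rw [aeval_X_left_apply] at h3
  exact h3.symm

lemma fs1 {K : Type u} [Field K] (a t b : K) (ha : a ≠ 0) (ht : t ≠ 0) :
    a / t * (0 + b * t / a * 1) = b := by field_simp; ring
lemma fs2 {K : Type u} [Field K] (a t b : K) (ht : t ≠ 0) :
    a / t * (t + b * 0) = a := by field_simp; ring
lemma fs3 {K : Type u} [Field K] (a t b c : K) (ha : a ≠ 0) (ht : t ≠ 0) :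
    a / t * (c + (b * t / a - c) * 1) = b := by field_simp; ring

lemma exists_line (s0 t0 : k) (hst : s0 ≠ 0 ∨ t0 ≠ 0) : ∃ s1 t1 : k,
    ∀ (d : ℕ) (p : MvPolynomial (Fin 2) k), p.IsHomogeneous d →
      aeval (line s0 t0 s1 t1) p = 0 → p = 0 := by
  let R := MvPolynomial (Fin 2) k
  let K := FractionRing R
  have hK : Function.Injective (algebraMap R K) := IsFractionRing.injective R K
  have hX : ∀ i, algebraMap R K (X i) ≠ 0 := fun i => by
    rw [Ne, map_eq_zero_iff _ hK]; exact X_ne_zero i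
  have hkz : ∀ x : k, x ≠ 0 → algebraMap k K x ≠ 0 := fun x hx => by
    rwa [Ne, map_eq_zero_iff _ (algebraMap k K).injective]
  by_cases hs : s0 = 0
  · have ht : t0 ≠ 0 := by tauto
    refine ⟨1, 0, line_inj (K := K) hK s0 t0 1 0 (algebraMap R K (X 1) / algebraMap k K t0)
      (algebraMap R K (X 0) * algebraMap k K t0 / algebraMap R K (X 1)) ?_ ?_⟩
    · have := hX 1
      have := hkz t0 ht
      rw [hs, map_zero, map_one]; exact fs1 _ _ _ (hX 1) this
    · have := hkz t0 ht
      rw [map_zero]; exact fs2 _ _ _ this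
  · refine ⟨0, 1, line_inj (K := K) hK s0 t0 0 1 (algebraMap R K (X 0) / algebraMap k K s0)
      (algebraMap R K (X 1) * algebraMap k K s0 / algebraMap R K (X 0) - algebraMap k K t0) ?_ ?_⟩
    · have := hkz s0 hs
      rw [map_zero]; exact fs2 _ _ _ this
    · have := hX 0
      have := hkz s0 hs
      rw [map_one]; exact fs3 _ _ _ _ (hX 0) this

lemma exists_indep (s0 t0 s1 t1 : k) (hl : ∀ (d : ℕ) (p : MvPolynomial (Fin 2) k), p.IsHomogeneous d →
      aeval (line s0 t0 s1 t1) p = 0 → p = 0) (d : ℕ) (hd : 1 ≤ d)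
    (p : Fin 3 → MvPolynomial (Fin 2) k) (hp : ∀ i, (p i).IsHomogeneous d)
    (hc : ∀ h, (∀ i, h ∣ p i) → IsUnit h) :
    ∃ i j, ∀ a b : k, Polynomial.C a * aeval (line s0 t0 s1 t1) (p i) =
      Polynomial.C b * aeval (line s0 t0 s1 t1) (p j) → a = 0 ∧ b = 0 := by
  by_contra! hcon
  have h1 : ∃ i, p i ≠ 0 := by
    by_contra! h
    exact not_isUnit_zero (hc 0 (fun i => by rw [h i]))
  obtain ⟨i, hi⟩ := h1
  have hdiv : ∀ j, p i ∣ p j := by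
    intro j
    obtain ⟨a, b, hab, hne⟩ := hcon i j
    have h2 : C a * p i - C b * p j = 0 := by
      apply hl d
      · exact ((hp i).C_mul a).sub ((hp j).C_mul b)
      · rw [map_sub, map_mul, map_mul, sub_eq_zero]
        simpa [aeval_C] using hab
    by_cases hb : b = 0
    · exfalso
      subst hb
      have ha : a ≠ 0 := fun ha => hne ha rfl
      simp [ha, hi] at h2
    · refine ⟨C (b⁻¹ * a), ?_⟩
      have h3 : C b⁻¹ * C b = (1 : MvPolynomial (Fin 2) k) := by
        rw [← C_mul, inv_mul_cancel₀ hb, C_1]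
      rw [C_mul]
      linear_combination (-p j) * h3 - C b⁻¹ * h2
  have hu := (hc (p i) hdiv).map (constantCoeff (σ := Fin 2) (R := k))
  have : constantCoeff (p i) = 0 := by
    rw [constantCoeff_eq]
    apply (hp i).coeff_eq_zero
    simp; omega
  rw [this] at hu
  exact not_isUnit_zero hu

lemma final (hchar : (2 : k) ≠ 0)
    (g : MvPolynomial (Fin 3) k) (hg : g.IsHomogeneous 4)
    (hB : ¬ ∃ P : Fin 3 → AlgebraicClosure k, P ≠ 0 ∧
        eval P (map (algebraMap k (AlgebraicClosure k)) g) = 0 ∧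
        ∀ i : Fin 3, eval P (pderiv i (map (algebraMap k (AlgebraicClosure k)) g)) = 0)
    (d : ℕ) (hd : 1 ≤ d)
    (p : Fin 3 → MvPolynomial (Fin 2) k) (hp : ∀ i, (p i).IsHomogeneous d)
    (hc : ∀ h, (∀ i, h ∣ p i) → IsUnit h)
    (hGsq : ∃ H : MvPolynomial (Fin 2) (AlgebraicClosure k),
      map (algebraMap k (AlgebraicClosure k)) (aeval p g) = H ^ 2)
    (s0 t0 c : k) (hne : eval ![s0, t0] (aeval p g) ≠ 0) (hcc : eval ![s0, t0] (aeval p g) = c ^ 2) :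
    ∃ u v ω : FractionRing (MvPolynomial (Fin 2) k),
      AlgebraicIndependent k ![u, v] ∧ ω ^ 2 = aeval ![u, v, 1] g := by
  have hGh : (aeval p g).IsHomogeneous (d * 4) := by
    exact hg.aeval p hp
  have hst : s0 ≠ 0 ∨ t0 ≠ 0 := by
    by_contra! h
    obtain ⟨rfl, rfl⟩ := h
    apply hne
    have : (![0, 0] : Fin 2 → k) = 0 := by funext i; fin_cases i <;> rfl
    rw [this, eval_zero, constantCoeff_eq]
    apply hGh.coeff_eq_zero
    simp; omega
  obtain ⟨s1, t1, hl⟩ := exists_line s0 t0 hst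
  have hc0 : c ≠ 0 := by rintro rfl; apply hne; rw [hcc]; ring
  obtain ⟨Hb, hHb⟩ := hGsq
  let F := aeval (line s0 t0 s1 t1) (aeval p g)
  have hF0 : F.coeff 0 = c ^ 2 := by
    rw [← hcc, Polynomial.coeff_zero_eq_aeval_zero, comp_aeval_apply, ← coe_aeval_eq_eval]
    change aeval _ _ = aeval _ _
    congr 2
    funext i; fin_cases i <;> simp [line]
  have hFs : F.map (algebraMap k (AlgebraicClosure k)) =
      (aeval (fun i => (line s0 t0 s1 t1 i).map (algebraMap k (AlgebraicClosure k))) Hb) ^ 2 := by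
    rw [← map_pow, ← hHb, aeval_map_algebraMap]
    exact (comp_aeval_apply (line s0 t0 s1 t1)
      (Polynomial.mapAlgHom (Algebra.ofId k (AlgebraicClosure k))) (aeval p g))
  obtain ⟨H, hH⟩ := sqrt_descent hchar F _ hFs c hc0 hF0
  have hH0 : H ≠ 0 := by
    rintro rfl
    rw [hH] at hF0
    simp at hF0
    exact hc0 (pow_eq_zero_iff two_ne_zero |>.mp hF0.symm)
  obtain ⟨P', H', h1, h2, h3⟩ := sep_red hchar g hg _
    (fun i => aeval (line s0 t0 s1 t1) (p i)) H rfl hH0 (by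
      rw [← hH]; exact (comp_aeval_apply p (aeval (line s0 t0 s1 t1)) g).symm) (exists_indep s0 t0 s1 t1 hl d hd p hp hc)
  exact main_W hchar g hg hB P' H' h1 h2 h3
end hom
end DP2

/-- Parametrized form of part (1) of **Theorem 1.2**. Let `k` be a field of characteristic
`≠ 2`, `g ∈ k[x,y,z]` homogeneous of degree 4 defining a smooth plane quartic `B`, and let
`X` be the del Pezzo surface of degree 2 given by `w² = g` in `P(1,1,1,2)`. Let `p, q, r`
be homogeneous of degree `d ≥ 1` in `k[s,t]` without nonconstant common factor and set
`G = g(p,q,r)`. If `G ≠ 0`, `G` is a square in `k̄[s,t]`, and `G(s₀,t₀)` is a nonzero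
square in `k` for some `(s₀,t₀) ∈ k²`, then `X` is unirational over `k`. -/
theorem delPezzo_deg_two_unirational_of_even_tangency_curve
    (k : Type*) [Field k] (hchar : (2 : k) ≠ 0)
    (g : MvPolynomial (Fin 3) k) (hg : g.IsHomogeneous 4)
    (hBsmooth : ¬ ∃ P : Fin 3 → AlgebraicClosure k, P ≠ 0 ∧
        eval P (map (algebraMap k (AlgebraicClosure k)) g) = 0 ∧
        ∀ i : Fin 3, eval P (pderiv i (map (algebraMap k (AlgebraicClosure k)) g)) = 0)
    (d : ℕ) (hd : 1 ≤ d)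
    (p q r : MvPolynomial (Fin 2) k)
    (hp : p.IsHomogeneous d) (hq : q.IsHomogeneous d) (hr : r.IsHomogeneous d)
    (hcoprime : ∀ h : MvPolynomial (Fin 2) k, h ∣ p → h ∣ q → h ∣ r → IsUnit h)
    (G : MvPolynomial (Fin 2) k) (hG : G = aeval ![p, q, r] g)
    (hG0 : G ≠ 0)
    (hGsq : ∃ H : MvPolynomial (Fin 2) (AlgebraicClosure k),
        map (algebraMap k (AlgebraicClosure k)) G = H ^ 2)
    (hGval : ∃ s₀ t₀ : k, eval ![s₀, t₀] G ≠ 0 ∧ ∃ c : k, eval ![s₀, t₀] G = c ^ 2) :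
    ∃ u v ω : FractionRing (MvPolynomial (Fin 2) k),
      AlgebraicIndependent k ![u, v] ∧ ω ^ 2 = aeval ![u, v, 1] g := by
  obtain ⟨s0, t0, hne, c, hc⟩ := hGval
  subst hG
  refine DP2.final hchar g hg hBsmooth d hd ![p, q, r] ?_ ?_ hGsq s0 t0 c hne hc
  · intro i
    fin_cases i
    · exact hp
    · exact hq
    · exact hr
  · intro h hh
    exact hcoprime h (hh 0) (hh 1) (hh 2)
end

section
/- There exist elements u, v, ω of the rational function field F₃(s,t) in two variables over the field F₃ = Z/3Z such that u and v are algebraically independent over F₃ and −ω² = (u² + v²)² + v³ − v. -/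
lemma curve_id {R : Type*} [CommRing R] (h3 : (3:R) = 0) (t : R) :
    -(t*(t^2-1)*(t^4+1)*(t^8+1))^2 = ((t^2*(t^2-1))^2 + (t^2*(t^2-1)^2)^2)^2
      + (t^2*(t^2-1)^2)^3*(t^8-t^2+1) - (t^2*(t^2-1)^2)*(t^8-t^2+1)^3 := by
  grind

lemma surf_id {K : Type*} [Field K] (h3 : (3:K) = 0) (x y z w m q r l n F2 e D3 D4 s : K)
    (hq : q = x^2+y^2) (hr : r = y^3-y*z^2) (hl : l = x+y*m) (hn : n = 1+m^2)
    (hF2 : F2 = l^2-q*n) (he : e = -r*F2+q*l*m*z^2+m^2*z^5)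
    (hD3 : D3 = -q*l*e + m*z^2*(q^3*n+z*e) + l*n*(2*q^2*r+z*r^2) + m^3*(q^2+z*r)^2)
    (hD4 : D4 = 2*q^3*n*e + z*e^2 - n^2*z^2*r^3)
    (hw0 : w ≠ 0) (hz0 : z ≠ 0) (hD0 : D4 ≠ 0)
    (hw : -w^2 = q^2 + z*r) (hs : s = -w^2*D3/D4) :
    -((w + (q*l-m*z^3)/w*s + (q^3*n+z*e)/w^3*s^2)/z^2)^2 =
      (((x+s)/z)^2+((y+s*m)/z)^2)^2 + ((y+s*m)/z)^3 - (y+s*m)/z := by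
  obtain ⟨a1, ha1⟩ : ∃ a, a = (q*l-m*z^3)/w := ⟨_, rfl⟩
  obtain ⟨a2, ha2⟩ : ∃ a, a = (q^3*n+z*e)/w^3 := ⟨_, rfl⟩
  rw [← ha1, ← ha2]
  have h1 : a1*w = q*l-m*z^3 := by rw [ha1]; field_simp
  have h2 : a2*w^3 = q^3*n+z*e := by rw [ha2]; field_simp
  have h2' : w*a2 = F2 + a1^2 := by
    have : w^2*(w*a2) = w^2*(F2 + a1^2) := by
      have : w^2*a1^2 = (q*l-m*z^3)^2 := by rw [← h1]; ring
      have hw' : w^2 = -(q^2+z*r) := by rw [← hw]; ring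
      rw [mul_add, this, show w^2*(w*a2) = a2*w^3 by ring, h2, hw', he, hF2]
      linear_combination (q*l*m*z^3) * h3
    exact mul_left_cancel₀ (pow_ne_zero 2 hw0) this
  have h4 : s*D4 = -w^2*D3 := by rw [hs]; field_simp
  have hw4 : w^4 = (q^2+z*r)^2 := by rw [← hw]; ring
  have hw6 : w^6 = -(q^2+z*r)^3 := by rw [← hw]; ring
  have hC3 : (2*a1*a2 + l*n+m^3*z)*w^4 = z*D3 := by
    have : a1*a2*w^4 = (q*l-m*z^3)*(q^3*n+z*e) := by rw [← h1, ← h2]; ring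
    rw [show (2*a1*a2 + l*n+m^3*z)*w^4 = 2*(a1*a2*w^4)+(l*n+m^3*z)*w^4 by ring, this, hw4, hD3]
    linear_combination ((q*l-m*z^3)*(q^3*n+z*e)) * h3
  have hC4 : (a2^2+n^2)*w^6 = z*D4 := by
    have : a2^2*w^6 = (q^3*n+z*e)^2 := by rw [← h2]; ring
    rw [add_mul, this, hw6, hD4]
    linear_combination (-n^2*q^2*z*r*(q^2+z*r)) * h3
  have hcan : (2*a1*a2 + l*n+m^3*z) + s*(a2^2+n^2) = 0 := by
    have : w^6*((2*a1*a2 + l*n+m^3*z) + s*(a2^2+n^2)) = 0 := by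
      linear_combination w^2*hC3 + s*hC4 + z*h4
    exact (mul_eq_zero.mp this).resolve_left (pow_ne_zero 6 hw0)
  have main : -(w+a1*s+a2*s^2)^2 = ((x+s)^2+(y+s*m)^2)^2 + (y+s*m)^3*z-(y+s*m)*z^3 := by
    have hF2' : w*a2 = l^2-q*n + a1^2 := by rw [h2', hF2]
    have key : ((x+s)^2+(y+s*m)^2)^2 + (y+s*m)^3*z-(y+s*m)*z^3
      = q^2+z*r + (4*q*l-m*z^3+3*y^2*m*z)*s + (4*l^2+2*q*n+3*y*m^2*z)*s^2+(4*l*n+m^3*z)*s^3+n^2*s^4 := by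
      rw [hq, hr, hl, hn]; ring
    rw [key, ← hw]
    linear_combination (-s^3)*hcan - 2*s*h1 - 2*s^2*hF2' + (-(q*l-m*z^3)*s + s^2*a1^2-l*n*s^3 - 2*q*l*s + (-2*a1^2*s^2+s*q*l-s*m*z*y^2-2*s^2*l^2-s^2*m^2*z*y)) * h3
  field_simp
  linear_combination main

lemma indep_aux {F P K k : Type*} [Field F] [CommRing P] [Algebra F P] [Field K] [Algebra P K]
    [Algebra F K] [IsScalarTower F P K] (hinj : Function.Injective (algebraMap P K))
    [Field k] [Algebra F k] (φ : P →ₐ[F] k) (A B C : P) (hC : C ≠ 0) (hφC : φ C = 0)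
    (hφB : φ B ≠ 0) (hU : Transcendental F (φ A / φ B)) :
    AlgebraicIndependent F ![algebraMap P K A / algebraMap P K C,
      algebraMap P K B / algebraMap P K C] := by
  rw [algebraicIndependent_iff]
  intro Q hQ
  by_contra hQ0
  have hC' : algebraMap P K C ≠ 0 := by
    rwa [Ne, map_eq_zero_iff _ hinj]
  set d := Q.totalDegree with hd
  have hle : ∀ σ ∈ Q.support, σ 0 + σ 1 ≤ d := by
    intro σ hσ
    have := MvPolynomial.le_totalDegree hσ
    rwa [Finsupp.sum_fintype _ _ (fun _ => rfl), Fin.sum_univ_two] at this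
  obtain ⟨τ, hτ, hτd⟩ : ∃ τ ∈ Q.support, τ 0 + τ 1 = d := by
    have hne : Q.support.Nonempty := by
      rwa [Finset.nonempty_iff_ne_empty, Ne, MvPolynomial.support_eq_empty]
    obtain ⟨τ, hτ, h⟩ := Finset.exists_mem_eq_sup Q.support hne (fun s => s.sum fun _ e => e)
    refine ⟨τ, hτ, ?_⟩
    rw [Finsupp.sum_fintype _ _ (fun _ => rfl), Fin.sum_univ_two] at h
    exact h.symm
  have h1 : ∑ σ ∈ Q.support, algebraMap F P (Q.coeff σ) *
      (A ^ σ 0 * B ^ σ 1 * C ^ (d - (σ 0 + σ 1))) = 0 := by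
    apply hinj
    rw [MvPolynomial.aeval_def, MvPolynomial.eval₂_eq'] at hQ
    have := congrArg (fun a => (algebraMap P K C) ^ d * a) hQ
    simp only [mul_zero, Finset.mul_sum] at this
    rw [map_zero, map_sum, ← this]
    refine Finset.sum_congr rfl fun σ hσ => ?_
    have hs := hle σ hσ
    obtain ⟨j, hj⟩ := Nat.exists_eq_add_of_le hs
    rw [Fin.prod_univ_two, hj]
    simp only [map_mul, map_pow, ← IsScalarTower.algebraMap_apply, Matrix.cons_val_zero,
      Matrix.cons_val_one, Nat.add_sub_cancel_left]
    rw [div_pow, div_pow, pow_add, pow_add]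
    field_simp
  have h2 := congrArg φ h1
  simp only [map_sum, map_mul, map_pow, map_zero, hφC, AlgHom.commutes] at h2
  let h : Polynomial F := ∑ σ ∈ Q.support, if σ 0 + σ 1 = d then
    Polynomial.monomial (σ 0) (Q.coeff σ) else 0
  have h3 : Polynomial.aeval (φ A / φ B) h = 0 := by
    have : φ B ^ d * Polynomial.aeval (φ A / φ B) h = 0 := by
      rw [← h2, map_sum, Finset.mul_sum]
      refine Finset.sum_congr rfl fun σ hσ => ?_
      have hs := hle σ hσ
      split_ifs with hc
      · rw [← hc, Polynomial.aeval_monomial, Nat.sub_self, div_pow, pow_add]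
        field_simp
      · rw [zero_pow (by omega)]; simp
    exact (mul_eq_zero.mp this).resolve_left (pow_ne_zero _ hφB)
  have h4 : h = 0 := (transcendental_iff.mp hU) h h3
  have h5 : h.coeff (τ 0) = Q.coeff τ := by
    simp only [h, Polynomial.finsetSum_coeff]
    rw [Finset.sum_eq_single τ]
    · simp [hτd]
    · intro σ hσ hne
      split_ifs with hc
      · rw [Polynomial.coeff_monomial, if_neg]
        intro h0
        apply hne
        ext i
        fin_cases i
        · exact h0
        · show σ 1 = τ 1
          omega
      · simp
    · exact fun h => absurd hτ h
  rw [h4, Polynomial.coeff_zero] at h5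
  exact (MvPolynomial.mem_support_iff.mp hτ) h5.symm

lemma main_aux {P K k : Type*} [CommRing P] [IsDomain P] [Algebra (ZMod 3) P] [Field K]
    [Algebra P K] [Algebra (ZMod 3) K] [IsScalarTower (ZMod 3) P K] [Field k]
    [Algebra (ZMod 3) k] (f : P →+* K) (hf : f = algebraMap P K) (hinj : Function.Injective f)
    (i μ : k) (hi : i ^ 2 = -1) (hμ : Transcendental (ZMod 3) μ) (φ : P →ₐ[ZMod 3] k)
    (t m : P) (hφt : φ t = i) (hφm : φ m = μ) (hz0 : t^8-t^2+1 ≠ 0)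
    (hk3 : (3:k) = 0) (hK3 : (3:K) = 0) (hP3 : (3:P) = 0) :
    ∃ u v ω : K, AlgebraicIndependent (ZMod 3) ![u, v] ∧
      -ω ^ 2 = (u ^ 2 + v ^ 2) ^ 2 + v ^ 3 - v := by
  obtain ⟨x, hx⟩ : ∃ x, x = t^2*(t^2-1) := ⟨_, rfl⟩
  obtain ⟨y, hy⟩ : ∃ y, y = t^2*(t^2-1)^2 := ⟨_, rfl⟩
  obtain ⟨z, hz⟩ : ∃ z, z = t^8-t^2+1 := ⟨_, rfl⟩
  obtain ⟨w, hw⟩ : ∃ w, w = t*(t^2-1)*(t^4+1)*(t^8+1) := ⟨_, rfl⟩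
  obtain ⟨q, hq⟩ : ∃ q, q = x^2+y^2 := ⟨_, rfl⟩
  obtain ⟨r, hr⟩ : ∃ r, r = y^3-y*z^2 := ⟨_, rfl⟩
  obtain ⟨l, hl⟩ : ∃ l, l = x+y*m := ⟨_, rfl⟩
  obtain ⟨n, hn⟩ : ∃ n, n = 1+m^2 := ⟨_, rfl⟩
  obtain ⟨F2, hF2⟩ : ∃ F2, F2 = l^2-q*n := ⟨_, rfl⟩
  obtain ⟨e, he⟩ : ∃ e, e = -r*F2+q*l*m*z^2+m^2*z^5 := ⟨_, rfl⟩
  obtain ⟨D3, hD3⟩ : ∃ D3, D3 = -q*l*e + m*z^2*(q^3*n+z*e) + l*n*(2*q^2*r+z*r^2)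
    + m^3*(q^2+z*r)^2 := ⟨_, rfl⟩
  obtain ⟨D4, hD4⟩ : ∃ D4, D4 = 2*q^3*n*e + z*e^2 - n^2*z^2*r^3 := ⟨_, rfl⟩
  have hcurve : -w^2 = q^2 + z*r := by
    have := curve_id hP3 t
    rw [← hx, ← hy, ← hz, ← hw] at this
    rw [this, hq, hr]; ring
  have φx : φ x = -1 := by
    rw [hx]; simp only [map_mul, map_sub, map_pow, map_one, hφt, hi]; linear_combination hk3
  have φy : φ y = -1 := by
    rw [hy]; simp only [map_mul, map_sub, map_pow, map_one, hφt, hi]; linear_combination -hk3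
  have φz : φ z = 0 := by
    rw [hz]; simp only [map_add, map_sub, map_pow, map_one, hφt, hi,
      show i^8 = (i^2)^4 by ring]
    linear_combination hk3
  have φw : φ w = i := by
    rw [hw]; simp only [map_add, map_mul, map_sub, map_pow, map_one, hφt, hi,
      show i^8 = (i^2)^4 by ring, show i^4 = (i^2)^2 by ring]
    linear_combination (-3*i)*hk3
  have φq : φ q = -1 := by
    rw [hq]; simp only [map_add, map_pow, φx, φy]; linear_combination hk3
  have φr : φ r = -1 := by
    rw [hr]; simp only [map_sub, map_mul, map_pow, φz, φy]; ring
  have φl : φ l = -(1+μ) := by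
    rw [hl]; simp only [map_add, map_mul, φx, φy, hφm]; ring
  have φn : φ n = 1+μ^2 := by
    rw [hn]; simp only [map_add, map_pow, map_one, hφm]
  have φF2 : φ F2 = -(μ-1)^2 := by
    rw [hF2]; simp only [map_sub, map_mul, map_pow, φl, φq, φn]
    linear_combination (1+μ^2)*hk3
  have φe : φ e = -(μ-1)^2 := by
    rw [he]; simp only [map_add, map_neg, map_mul, map_pow, φr, φF2, φz]; ring
  have φD3 : φ D3 = μ*(μ-1)^2 := by
    rw [hD3]
    simp only [map_add, map_neg, map_mul, map_pow, map_ofNat, φr, φe, φz, φq, φl, φn, hφm]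
    linear_combination (μ^3+μ^2+1)*hk3
  have φD4 : φ D4 = -(1+μ^2)*(μ-1)^2 := by
    rw [hD4]
    simp only [map_add, map_sub, map_mul, map_pow, map_ofNat, φr, φe, φz, φq, φn]
    linear_combination ((1+μ^2)*(μ-1)^2)*hk3
  have ne_sub : μ - 1 ≠ 0 := by
    intro h
    have : μ = algebraMap (ZMod 3) k 1 := by rw [map_one]; linear_combination h
    exact hμ (this ▸ isAlgebraic_algebraMap _)
  have ne_add : 1 + μ ≠ 0 := by
    intro h
    have : μ = algebraMap (ZMod 3) k (-1) := by rw [map_neg, map_one]; linear_combination h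
    exact hμ (this ▸ isAlgebraic_algebraMap _)
  have ne_sq : 1 + μ^2 ≠ 0 := by
    intro h
    refine hμ ⟨1 + Polynomial.X^2, ?_, by simpa using h⟩
    intro h0
    have := congrArg (fun p => Polynomial.coeff p 2) h0
    simp [Polynomial.coeff_one] at this
  obtain ⟨A, hA⟩ : ∃ A, A = x*D4 - w^2*D3 := ⟨_, rfl⟩
  obtain ⟨B, hB⟩ : ∃ B, B = y*D4 - w^2*D3*m := ⟨_, rfl⟩
  have φA : φ A = (μ-1)^2*(μ-1)^2 := by
    rw [hA]; simp only [map_sub, map_mul, map_pow, φx, φD4, φD3, φw, hi]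
    linear_combination (μ*(μ-1)^2)*hk3
  have φB : φ B = -(μ-1)^2*(μ-1)*(1+μ) := by
    rw [hB]; simp only [map_sub, map_mul, map_pow, φy, φD4, φD3, φw, hi, hφm]
    linear_combination (μ^2*(μ-1)^2)*hk3
  have φB0 : φ B ≠ 0 := by
    rw [φB]
    exact mul_ne_zero (mul_ne_zero (neg_ne_zero.mpr (pow_ne_zero _ ne_sub)) ne_sub) ne_add
  have hD0 : D4 ≠ 0 := by
    rintro h
    rw [h, map_zero] at φD4
    exact mul_ne_zero (neg_ne_zero.mpr ne_sq) (pow_ne_zero _ ne_sub) φD4.symm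
  have hw0 : w ≠ 0 := by
    rintro h
    rw [h, map_zero] at φw
    rw [← φw] at hi
    norm_num at hi
  have hz0' : z ≠ 0 := hz ▸ hz0
  have hfz : f z ≠ 0 := by rwa [Ne, map_eq_zero_iff _ hinj]
  have hfw : f w ≠ 0 := by rwa [Ne, map_eq_zero_iff _ hinj]
  have hfD : f D4 ≠ 0 := by rwa [Ne, map_eq_zero_iff _ hinj]
  have hU : Transcendental (ZMod 3) (φ A / φ B) := by
    intro halg
    obtain ⟨U, hUd⟩ : ∃ U, U = φ A / φ B := ⟨_, rfl⟩
    rw [← hUd] at halg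
    have hU1 : U * (1+μ) = 1 - μ := by
      rw [hUd, φA, φB]; field_simp; ring
    have hne : 1 + U ≠ 0 := by
      intro h
      have : (1:k) = 0 := by linear_combination hk3 - (1+μ)*h + hU1
      exact one_ne_zero this
    have : μ = (1 - U) / (1 + U) := by
      rw [eq_div_iff hne]; linear_combination hU1
    apply hμ
    rw [this, div_eq_mul_inv]
    exact (isAlgebraic_one.sub halg).mul (isAlgebraic_one.add halg).inv
  have hind := indep_aux (F := ZMod 3) (P := P) (K := K) (hf ▸ hinj) φ A B (z*D4) (mul_ne_zero hz0' hD0)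
    (by rw [map_mul, φz, zero_mul]) φB0 hU
  rw [← hf] at hind
  obtain ⟨s, hs⟩ : ∃ s : K, s = -(f w)^2*f D3/f D4 := ⟨_, rfl⟩
  have hid := surf_id hK3 (f x) (f y) (f z) (f w) (f m) (f q) (f r) (f l) (f n) (f F2) (f e) (f D3)
    (f D4) s (by simp [hq]) (by simp [hr]) (by simp [hl]) (by simp [hn]) (by simp [hF2])
    (by simp [he]) (by simp [hD3, map_ofNat]) (by simp [hD4, map_ofNat]) hfw hfz hfD
    (by simpa using congrArg f hcurve) hs
  have e1 : (f x + s) / f z = f A / f (z*D4) := by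
    rw [hs, hA]; simp only [map_mul, map_sub, map_pow]; field_simp; ring
  have e2 : (f y + s * f m) / f z = f B / f (z*D4) := by
    rw [hs, hB]; simp only [map_mul, map_sub, map_pow]; field_simp; ring
  rw [e1, e2] at hid
  exact ⟨_, _, _, hind, hid⟩

lemma three_aux (R : Type*) [CommRing R] [Algebra (ZMod 3) R] : (3:R) = 0 := by
  have h : (3 : ZMod 3) = 0 := by decide
  have := congrArg (algebraMap (ZMod 3) R) h
  rwa [map_ofNat, map_zero] at this

/-- Unirationality of the del Pezzo surface `X₁ : −w² = (x²+y²)² + y³z − yz³` of degree 2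
over `F₃` (case `i = 1` of Theorem 3.3): there exist `u, v, ω` in the rational function
field `F₃(s,t)` with `u, v` algebraically independent over `F₃` and
`−ω² = (u² + v²)² + v³ − v`. -/
theorem X1_unirational :
    ∃ u v ω : FractionRing (MvPolynomial (Fin 2) (ZMod 3)),
      AlgebraicIndependent (ZMod 3) ![u, v] ∧
      -ω ^ 2 = (u ^ 2 + v ^ 2) ^ 2 + v ^ 3 - v := by
  obtain ⟨i, hi⟩ : ∃ i : AlgebraicClosure (RatFunc (ZMod 3)), i ^ 2 = -1 :=
    IsAlgClosed.exists_pow_nat_eq _ (by norm_num)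
  have hμ : Transcendental (ZMod 3) (algebraMap (RatFunc (ZMod 3))
      (AlgebraicClosure (RatFunc (ZMod 3))) RatFunc.X) := by
    have hX : Transcendental (ZMod 3) (RatFunc.X : RatFunc (ZMod 3)) := RatFunc.transcendental_X
    exact (transcendental_algebraMap_iff (algebraMap (RatFunc (ZMod 3))
      (AlgebraicClosure (RatFunc (ZMod 3)))).injective).mpr hX
  refine main_aux (P := MvPolynomial (Fin 2) (ZMod 3)) (algebraMap _ _) rfl
    (IsFractionRing.injective _ _) i _ hi hμ
    (MvPolynomial.aeval ![i, algebraMap (RatFunc (ZMod 3))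
      (AlgebraicClosure (RatFunc (ZMod 3))) RatFunc.X]) (MvPolynomial.X 0) (MvPolynomial.X 1)
    (by simp) (by simp) ?_ (three_aux _) (three_aux _) (three_aux _)
  intro h
  have := congrArg (MvPolynomial.aeval (fun _ => (0 : ZMod 3))) h
  simp at this
end

section
/- There exist elements u, v, ω of the rational function field F₃(s,t) in two variables over the field F₃ = Z/3Z such that u and v are algebraically independent over F₃ and −ω² = u⁴ + v³ − v. -/
open MvPolynomial in
lemma homog_two {Ω : Type*} [Field Ω] [Algebra (ZMod 3) Ω] (d : ℕ)
    (F : MvPolynomial (Fin 2) (ZMod 3)) (hF : F.IsHomogeneous d) (hF0 : F ≠ 0)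
    (n s : Ω) (hn : n ≠ 0) (h : aeval ![n, n * s] F = 0) : IsAlgebraic (ZMod 3) s := by
  have h1 : aeval ![n, n * s] F = n ^ d * aeval ![1, s] F := by
    rw [aeval_def, aeval_def, eval₂_eq', eval₂_eq', Finset.mul_sum]
    refine Finset.sum_congr rfl fun m hm => ?_
    have hd := hF (mem_support_iff.mp hm)
    have : m 0 + m 1 = d := by
      rw [← hd, Finsupp.weight_apply, Finsupp.sum_fintype _ _ (by simp)]
      simp
    simp [Fin.prod_univ_two]
    rw [← this]; ring
  have h2 : aeval ![1, s] F = 0 := by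
    rw [h1] at h
    exact (mul_eq_zero.mp h).resolve_left (pow_ne_zero _ hn)
  let G : Polynomial (ZMod 3) := aeval ![1, Polynomial.X] F
  refine ⟨G, ?_, ?_⟩
  · obtain ⟨m, hm⟩ := ne_zero_iff.mp hF0
    intro hG
    apply hm
    have : G.coeff (m 1) = coeff m F := by
      simp only [G]
      rw [aeval_def, eval₂_eq', Polynomial.finsetSum_coeff]
      rw [Finset.sum_eq_single m]
      · simp [Fin.prod_univ_two, Polynomial.algebraMap_eq]
      · intro b hb hbm
        have hd := hF (mem_support_iff.mp hb)
        have hd' := hF hm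
        rw [Finsupp.weight_apply, Finsupp.sum_fintype _ _ (by simp)] at hd hd'
        simp at hd hd'
        simp [Fin.prod_univ_two, Polynomial.algebraMap_eq, Polynomial.coeff_X_pow]
        intro h3
        exfalso; apply hbm
        ext i; fin_cases i <;> simp <;> omega
      · intro hm'; simp at hm'; simp [hm']
    rw [← this, hG]; simp
  · have : (Polynomial.aeval s) G = aeval ![1, s] F := by
      simp only [G]
      rw [← AlgHom.comp_apply]
      congr 1
      ext i; fin_cases i <;> simp
    rw [this, h2]

open MvPolynomial in
lemma core {k K : Type*} [Field k] [Field K] [Algebra (ZMod 3) k] [Algebra k K]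
    [Algebra (ZMod 3) K] [IsScalarTower (ZMod 3) k K] (x y w : k) (h : -w ^ 2 = x ^ 4 + y ^ 3 - y)
    (hw : w ≠ 0) (hsq : ∀ a : k, a ^ 2 ≠ -1) (hx : Transcendental (ZMod 3) x) (τ : K)
    (hτ : Transcendental k τ) :
    ∃ u v ω : K, AlgebraicIndependent (ZMod 3) ![u, v] ∧ -ω ^ 2 = u ^ 4 + v ^ 3 - v := by
  let D : Polynomial k := Polynomial.C (w ^ 2) * Polynomial.X ^ 4 + 1
  let N : Polynomial k := Polynomial.C (w ^ 2 * (1 + w ^ 4)) * Polynomial.X ^ 3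
    - Polynomial.C (x + x ^ 9)
  let S : Polynomial k := Polynomial.C (x ^ 3) - Polynomial.C (w ^ 2) * Polynomial.X
  let U : Polynomial k := Polynomial.C x * D + N
  let V : Polynomial k := Polynomial.C y * D + N * S
  have hD0 : D ≠ 0 := by
    intro h0
    have := congrArg (Polynomial.eval 0) h0
    simp [D] at this
  have hDτ : Polynomial.aeval τ D ≠ 0 := by
    intro h0; exact hτ ⟨D, hD0, h0⟩
  let lam : K := Polynomial.aeval τ N / Polynomial.aeval τ D
  let u : K := Polynomial.aeval τ U / Polynomial.aeval τ D
  let v : K := Polynomial.aeval τ V / Polynomial.aeval τ D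
  let X : K := algebraMap k K x
  let Y : K := algebraMap k K y
  let W : K := algebraMap k K w
  refine ⟨u, v, W * (1 + τ * lam + τ ^ 2 * lam ^ 2), ?_, ?_⟩
  · rw [algebraicIndependent_iff]
    intro F hF
    by_contra hF0
    set d := F.totalDegree with hd
    let H : Polynomial k := ∑ j ∈ Finset.range (d + 1),
      D ^ (d - j) * aeval ![U, V] (homogeneousComponent j F)
    have hH : H = 0 := by
      by_contra hH0
      apply hτ
      refine ⟨H, hH0, ?_⟩
      have e1 : ∀ j ∈ Finset.range (d + 1), Polynomial.aeval τ
          (D ^ (d - j) * aeval ![U, V] (homogeneousComponent j F)) =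
          (Polynomial.aeval τ D) ^ d * aeval ![u, v] (homogeneousComponent j F) := by
        intro j hj
        have hj' : j ≤ d := by simpa [Nat.lt_succ_iff] using hj
        have e2 : Polynomial.aeval τ (aeval ![U, V] (homogeneousComponent j F)) =
            aeval ![Polynomial.aeval τ U, Polynomial.aeval τ V] (homogeneousComponent j F) := by
          have : ((Polynomial.aeval τ).restrictScalars (ZMod 3)).comp
            (aeval (R := ZMod 3) ![U, V]) =
              aeval ![Polynomial.aeval τ U, Polynomial.aeval τ V] := by
            ext i; fin_cases i <;> simp
          exact DFunLike.congr_fun this _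
        have e3 : aeval ![Polynomial.aeval τ U, Polynomial.aeval τ V] (homogeneousComponent j F)
            = (Polynomial.aeval τ D) ^ j * aeval ![u, v] (homogeneousComponent j F) := by
          rw [aeval_def, aeval_def, eval₂_eq', eval₂_eq', Finset.mul_sum]
          refine Finset.sum_congr rfl fun m hm => ?_
          have hd := (homogeneousComponent_isHomogeneous j F) (mem_support_iff.mp hm)
          have : m 0 + m 1 = j := by
            rw [← hd, Finsupp.weight_apply, Finsupp.sum_fintype _ _ (by simp)]
            simp
          have hU : Polynomial.aeval τ U = Polynomial.aeval τ D * u := by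
            simp only [u]; field_simp
          have hV : Polynomial.aeval τ V = Polynomial.aeval τ D * v := by
            simp only [v]; field_simp
          simp only [Fin.prod_univ_two, Matrix.cons_val_zero, Matrix.cons_val_one]
          rw [hU, hV, ← this]; ring
        rw [map_mul, map_pow, e2, e3, ← mul_assoc, ← pow_add, Nat.sub_add_cancel hj']
      rw [map_sum, Finset.sum_congr rfl e1, ← Finset.mul_sum, ← map_sum,
        sum_homogeneousComponent, hF, mul_zero]
    have hFd : homogeneousComponent d F ≠ 0 := by
      intro h0
      obtain ⟨m, hm, hm2⟩ := Finset.exists_mem_eq_sup F.support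
        (support_nonempty.mpr hF0) (fun m => m.degree)
      have h2 := congrArg (coeff m) h0
      rw [coeff_homogeneousComponent, if_pos] at h2
      · exact (mem_support_iff.mp hm) (by simpa using h2)
      · rw [hd, ← hm2]; rfl
    have key : ∀ ρ : AlgebraicClosure k, Polynomial.aeval ρ D = 0 →
        IsAlgebraic (ZMod 3) (Polynomial.aeval ρ S) := by
      intro ρ hρ
      refine homog_two d _ (homogeneousComponent_isHomogeneous d F) hFd
        (Polynomial.aeval ρ N) _ ?_ ?_
      · intro hN
        have hN' : algebraMap k (AlgebraicClosure k) (w ^ 2 * (1 + w ^ 4)) * ρ ^ 3 -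
          algebraMap k (AlgebraicClosure k) (x + x ^ 9) = 0 := by
          simpa [N] using hN
        have hρ' : algebraMap k (AlgebraicClosure k) (w ^ 2) * ρ ^ 4 + 1 = 0 := by
          simpa [D] using hρ
        have hk : w ^ 2 * (1 + w ^ 4) ^ 4 = - (x + x ^ 9) ^ 4 := by
          apply (algebraMap k (AlgebraicClosure k)).injective
          rw [map_mul] at hN'
          rw [map_mul, map_pow _ (1 + w ^ 4), map_neg, map_pow _ (x + x ^ 9)]
          generalize algebraMap k (AlgebraicClosure k) (w ^ 2) = a at *
          generalize algebraMap k (AlgebraicClosure k) (1 + w ^ 4) = A at *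
          generalize algebraMap k (AlgebraicClosure k) (x + x ^ 9) = B at *
          have e : -A = B * ρ := by linear_combination ρ * hN' - A * hρ'
          have e4 : A ^ 4 = B ^ 4 * ρ ^ 4 := by
            rw [← mul_pow, ← e]; ring
          rw [e4]; linear_combination B ^ 4 * hρ'
        by_cases hB : x + x ^ 9 = 0
        · rw [hB] at hk
          have : 1 + w ^ 4 = 0 := by
            by_contra hA
            have : w ^ 2 * (1 + w ^ 4) ^ 4 ≠ 0 := by positivity
            apply this; rw [hk]; ring
          exact hsq (w ^ 2) (by linear_combination this)
        · refine hsq (w * (1 + w ^ 4) ^ 2 / (x + x ^ 9) ^ 2) ?_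
          rw [div_pow, div_eq_iff (by positivity)]
          linear_combination hk
      · have := congrArg (Polynomial.aeval ρ) hH
        simp only [H, map_sum, map_zero] at this
        rw [Finset.sum_range_succ, Finset.sum_eq_zero] at this
        · rw [zero_add, Nat.sub_self, pow_zero, one_mul] at this
          rw [← this]
          have e : ((Polynomial.aeval ρ).restrictScalars (ZMod 3)).comp
            (aeval (R := ZMod 3) ![U, V]) =
              aeval ![Polynomial.aeval ρ N, Polynomial.aeval ρ N * Polynomial.aeval ρ S] := by
            ext i; fin_cases i <;> simp [U, V, hρ]
          exact (DFunLike.congr_fun e _).symm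
        · intro j hj
          have : d - j ≠ 0 := by simp at hj; omega
          rw [map_mul, map_pow, hρ, zero_pow this, zero_mul]
    have hdeg : (D.degree) ≠ 0 := by
      have : D.degree = 4 := by
        simp only [D]; compute_degree!
      rw [this]; decide
    obtain ⟨ρ, hρ⟩ := IsAlgClosed.exists_aeval_eq_zero (AlgebraicClosure k) D hdeg
    have k1 := key ρ hρ
    have k2 := key (-ρ) (by
      rw [← hρ]; simp only [D, map_add, map_mul, map_pow, map_one, Polynomial.aeval_X, Polynomial.aeval_C]; ring)
    have k3 := k1.add k2
    have c3 : (3 : AlgebraicClosure k) = 0 := by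
      have := congrArg (algebraMap (ZMod 3) (AlgebraicClosure k)) (show (3 : ZMod 3) = 0 from rfl)
      rw [map_zero] at this; rw [← this, map_ofNat]
    have k4 : Polynomial.aeval ρ S + Polynomial.aeval (-ρ) S =
        - (algebraMap k (AlgebraicClosure k) x) ^ 3 := by
      simp [S]
      linear_combination (algebraMap k (AlgebraicClosure k) x) ^ 3 * c3
    rw [k4] at k3
    have k5 := IsAlgebraic.of_pow (n := 3) (by norm_num) (by simpa using k3.neg)
    exact hx ((isAlgebraic_algebraMap_iff (algebraMap k (AlgebraicClosure k)).injective).mp k5)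
  · have c3 : (3 : K) = 0 := by
      have := congrArg (algebraMap (ZMod 3) K) (show (3 : ZMod 3) = 0 from rfl)
      rw [map_zero] at this; rw [← this, map_ofNat]
    have hu : u = X + lam := by
      simp only [u, lam, U, X]; simp; field_simp
    have hv : v = Y + lam * (X ^ 3 - W ^ 2 * τ) := by
      simp only [v, lam, V, X, Y, W]; simp; field_simp; simp [S]
    have hlam : lam * (W ^ 2 * τ ^ 4 + 1) = W ^ 2 * (1 + W ^ 4) * τ ^ 3 - (X + X ^ 9) := by
      have : lam * Polynomial.aeval τ D = Polynomial.aeval τ N := by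
        simp only [lam]; field_simp
      simpa [D, N] using this
    have hK : -W ^ 2 = X ^ 4 + Y ^ 3 - Y := by
      have := congrArg (algebraMap k K) h
      simpa using this
    rw [hu, hv]
    generalize lam = l at *
    have cube : ∀ a b : K, (a + b) ^ 3 = a ^ 3 + b ^ 3 := by
      intro a b; linear_combination (a ^ 2 * b + a * b ^ 2) * c3
    have cube' : ∀ a b : K, (a - b) ^ 3 = a ^ 3 - b ^ 3 := by
      intro a b; linear_combination (-a ^ 2 * b + a * b ^ 2) * c3
    rw [show (X + l) ^ 4 = (X + l) ^ 3 * (X + l) by ring, cube, cube, mul_pow l, cube']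
    linear_combination hK - l ^ 3 * hlam
      - W ^ 2 * (τ * l + τ ^ 2 * l ^ 2 + τ ^ 3 * l ^ 3) * c3

lemma x_transc {k : Type*} [Field k] [Algebra (ZMod 3) k] (t : k) (ht : Transcendental (ZMod 3) t)
    (h8 : t ^ 8 + 1 ≠ 0) :
    Transcendental (ZMod 3) ((t ^ 7 + t ^ 5 - t ^ 3 - t) / (t ^ 8 + 1)) := by
  intro hx
  apply ht
  set x := (t ^ 7 + t ^ 5 - t ^ 3 - t) / (t ^ 8 + 1) with hxd
  let L := algebraicClosure (ZMod 3) k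
  let a : L := ⟨x, by rwa [mem_algebraicClosure_iff]⟩
  have : IsAlgebraic L t := by
    refine ⟨.X ^ 7 + .X ^ 5 - .X ^ 3 - .X - .C a * (.X ^ 8 + 1), ?_, ?_⟩
    · intro h
      have := congrArg (fun p => Polynomial.eval 0 (Polynomial.derivative p)) h
      simp at this
    · have e : algebraMap L k a = x := rfl
      simp only [map_sub, map_add, map_mul, map_pow, map_one, Polynomial.aeval_X,
        Polynomial.aeval_C, e]
      rw [hxd]; field_simp; ring
  exact this.restrictScalars (ZMod 3)

lemma poly_ne {k : Type*} [Field k] [Algebra (ZMod 3) k] (t : k) (ht : Transcendental (ZMod 3) t)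
    (p : Polynomial (ZMod 3)) (hp : p ≠ 0) : Polynomial.aeval t p ≠ 0 := fun h => ht ⟨p, hp, h⟩

open MvPolynomial in
lemma no_sqrt (a : FractionRing (MvPolynomial (Fin 2) (ZMod 3))) : a ^ 2 ≠ -1 := by
  intro h
  have hi : IsIntegral (MvPolynomial (Fin 2) (ZMod 3)) a := by
    refine ⟨.X ^ 2 + 1, by monicity!, ?_⟩
    simp [h]
  obtain ⟨p, rfl⟩ := IsIntegrallyClosed.isIntegral_iff.mp hi
  have h2 : p ^ 2 = -1 := by
    apply IsFractionRing.injective (MvPolynomial (Fin 2) (ZMod 3))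
      (FractionRing (MvPolynomial (Fin 2) (ZMod 3)))
    simpa using h
  have h3 := congrArg (MvPolynomial.eval 0) h2
  rw [map_pow, map_neg, map_one] at h3
  generalize MvPolynomial.eval 0 p = c at h3
  revert c; decide

theorem X2_unirational :
    ∃ u v ω : FractionRing (MvPolynomial (Fin 2) (ZMod 3)),
      AlgebraicIndependent (ZMod 3) ![u, v] ∧
      -ω ^ 2 = u ^ 4 + v ^ 3 - v := by
  let K := FractionRing (MvPolynomial (Fin 2) (ZMod 3))
  let g : Fin 2 → K := fun i => algebraMap (MvPolynomial (Fin 2) (ZMod 3)) K (MvPolynomial.X i)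
  have hg : AlgebraicIndependent (ZMod 3) g :=
    (MvPolynomial.algebraicIndependent_X (Fin 2) (ZMod 3)).map'
      (f := IsScalarTower.toAlgHom (ZMod 3) (MvPolynomial (Fin 2) (ZMod 3)) K)
      (IsFractionRing.injective _ _)
  let k := IntermediateField.adjoin (ZMod 3) (g '' {0})
  have hτ : Transcendental k (g 1) :=
    IntermediateField.transcendental_adjoin_iff.mpr (hg.transcendental_adjoin (by simp))
  let t : k := ⟨g 0, IntermediateField.subset_adjoin _ _ ⟨0, rfl, rfl⟩⟩
  have ht : Transcendental (ZMod 3) t := by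
    intro h
    exact hg.transcendental 0 (h.algebraMap (A := K))
  have h8 : t ^ 8 + 1 ≠ 0 := by
    have := poly_ne t ht (.X ^ 8 + 1) (by
      intro h; have := congrArg (Polynomial.eval 0) h; simp at this)
    simpa using this
  have hw : t ^ 14 + t ^ 12 - t ^ 4 - t ^ 2 ≠ 0 := by
    have := poly_ne t ht (.X ^ 14 + .X ^ 12 - .X ^ 4 - .X ^ 2) (by
      intro h; have := congrArg (fun p => Polynomial.coeff p 14) h
      simp [Polynomial.coeff_X_pow] at this)
    simpa using this
  have c3 : (3 : k) = 0 := by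
    have := congrArg (algebraMap (ZMod 3) k) (show (3 : ZMod 3) = 0 from rfl)
    rw [map_zero] at this; rw [← this, map_ofNat]
  refine core (k := k) ((t ^ 7 + t ^ 5 - t ^ 3 - t) / (t ^ 8 + 1)) (-t ^ 4 / (t ^ 8 + 1))
    ((t ^ 14 + t ^ 12 - t ^ 4 - t ^ 2) / (t ^ 8 + 1) ^ 2) ?_ ?_ ?_ (x_transc t ht h8) (g 1) hτ
  · have key : (t ^ 7 + t ^ 5 - t ^ 3 - t) ^ 4 + (-t ^ 4) ^ 3 * (t ^ 8 + 1)
        - (-t ^ 4) * (t ^ 8 + 1) ^ 3 + (t ^ 14 + t ^ 12 - t ^ 4 - t ^ 2) ^ 2 = 0 := by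
      linear_combination ((1) * t ^ 4 + (2) * t ^ 6 + (1) * t ^ 8 + (-4) * t ^ 10 + (-5) * t ^ 12 + (2) * t ^ 14 + (8) * t ^ 16 + (2) * t ^ 18 + (-5) * t ^ 20 + (-4) * t ^ 22 + (1) * t ^ 24 + (2) * t ^ 26 + (1) * t ^ 28) * c3
    clear_value t
    generalize t ^ 7 + t ^ 5 - t ^ 3 - t = x at *
    generalize t ^ 14 + t ^ 12 - t ^ 4 - t ^ 2 = w at *
    generalize t ^ 8 + 1 = z at *
    generalize -t ^ 4 = y at *
    field_simp
    linear_combination -key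
  · exact div_ne_zero hw (pow_ne_zero _ h8)
  · intro a ha
    exact no_sqrt (a : K) (by exact_mod_cast congrArg (algebraMap k K) ha)
end

section
/- Let k be a field and let f₀, f₁, f₂, g₀, g₁, g₂, g₃, g₄, w₀ ∈ k satisfy w₀² + f₀w₀ = g₀. Set δ = f₀ + 2w₀ and assume δ ≠ 0. Then there exists a unique pair (a, b) ∈ k² such that X³ divides the polynomial (aX² + bX + w₀)² + (f₂X² + f₁X + f₀)(aX² + bX + w₀) − (g₄X⁴ + g₃X³ + g₂X² + g₁X + g₀) in k[X]; explicitly, the unique pair is given by b = δ⁻¹(g₁ − w₀f₁) and a = δ⁻¹(g₂ − w₀f₂ − b² − f₁b). -/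
open Polynomial

/-- The algebraic core of Lemma 4.4 and Remark 4.6: given `w₀² + f₀w₀ = g₀` and
`δ = f₀ + 2w₀ ≠ 0`, there is a unique pair `(a, b) ∈ k²` such that `X³` divides
`(aX² + bX + w₀)² + (f₂X² + f₁X + f₀)(aX² + bX + w₀) − (g₄X⁴ + g₃X³ + g₂X² + g₁X + g₀)`,
and it is given explicitly by `b = δ⁻¹(g₁ − w₀f₁)`, `a = δ⁻¹(g₂ − w₀f₂ − b² − f₁b)`. -/
theorem unique_tangent_section_coefficients
    (k : Type*) [Field k] (f₀ f₁ f₂ g₀ g₁ g₂ g₃ g₄ w₀ : k)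
    (hw : w₀ ^ 2 + f₀ * w₀ = g₀)
    (δ : k) (hδdef : δ = f₀ + 2 * w₀) (hδ : δ ≠ 0)
    (P : k → k → Polynomial k)
    (hP : ∀ a b : k, P a b =
      (C a * X ^ 2 + C b * X + C w₀) ^ 2
        + (C f₂ * X ^ 2 + C f₁ * X + C f₀) * (C a * X ^ 2 + C b * X + C w₀)
        - (C g₄ * X ^ 4 + C g₃ * X ^ 3 + C g₂ * X ^ 2 + C g₁ * X + C g₀))
    (b a : k)
    (hb : b = δ⁻¹ * (g₁ - w₀ * f₁))
    (ha : a = δ⁻¹ * (g₂ - w₀ * f₂ - b ^ 2 - f₁ * b)) :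
    (X ^ 3 ∣ P a b) ∧ ∀ a' b' : k, X ^ 3 ∣ P a' b' → a' = a ∧ b' = b := by
  have key : ∀ a b : k, P a b = X ^ 3 * (C (a ^ 2 + f₂ * a - g₄) * X
      + C (2 * a * b + f₂ * b + f₁ * a - g₃))
      + (C (δ * a + b ^ 2 + f₁ * b + w₀ * f₂ - g₂) * X ^ 2
      + C (δ * b + w₀ * f₁ - g₁) * X) := by
    intro a b
    rw [hP, ← hw, hδdef]
    simp only [C_add, C_sub, C_mul, C_pow, C_ofNat]
    ring
  have iff : ∀ a b : k, X ^ 3 ∣ P a b ↔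
      (δ * a + b ^ 2 + f₁ * b + w₀ * f₂ - g₂ = 0 ∧ δ * b + w₀ * f₁ - g₁ = 0) := by
    intro a b
    rw [key, dvd_add_right (dvd_mul_right _ _)]
    constructor
    · intro h
      rw [X_pow_dvd_iff] at h
      have h1 := h 1 (by norm_num)
      have h2 := h 2 (by norm_num)
      simp only [coeff_add, coeff_C_mul, coeff_X_pow, coeff_X] at h1 h2
      norm_num at h1 h2
      exact ⟨h2, h1⟩
    · rintro ⟨h1, h2⟩
      rw [h1, h2]
      simp
  have hb' : δ * b = g₁ - w₀ * f₁ := by rw [hb, mul_inv_cancel_left₀ hδ]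
  have ha' : δ * a = g₂ - w₀ * f₂ - b ^ 2 - f₁ * b := by
    rw [ha, mul_inv_cancel_left₀ hδ]
  refine ⟨(iff a b).2 ⟨by rw [ha']; ring, by rw [hb']; ring⟩, ?_⟩
  intro a' b' h
  obtain ⟨h1, h2⟩ := (iff a' b').1 h
  have e : b' = b := mul_left_cancel₀ hδ (by linear_combination h2 - hb')
  subst e
  exact ⟨mul_left_cancel₀ hδ (by linear_combination h1 - ha'), rfl⟩
end

section
/- Let k be a field and let f₀, g₀, w₀ ∈ k satisfy w₀² + f₀w₀ = g₀; set δ = f₀ + 2w₀ and assume δ ≠ 0. Let f₁, g₁ ∈ k[x,y] be homogeneous of degree 1 and f₂, g₂ ∈ k[x,y] homogeneous of degree 2, and set b = δ⁻¹(g₁ − w₀f₁), a = δ⁻¹(g₂ − w₀f₂ − b² − f₁b) in k[x,y], and f = f₂ + f₁z + f₀z² ∈ k[x,y,z]. Then δ³·(a + b·z + w₀·z²) = δ²·(g₂ + g₁z + 2g₀z² − w₀f) − g₁² + f₁·(g₀f₁ − f₀g₁) in k[x,y,z]. -/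
open MvPolynomial

/-- The identity of Remark 4.10 (the equality `ξ = ξ'`): with `δ = f₀ + 2w₀ ≠ 0`,
`w₀² + f₀w₀ = g₀`, `b = δ⁻¹(g₁ − w₀f₁)`, `a = δ⁻¹(g₂ − w₀f₂ − b² − f₁b)` in `k[x,y]`
and `f = f₂ + f₁z + f₀z²` in `k[x,y,z]`, one has
`δ³(a + bz + w₀z²) = δ²(g₂ + g₁z + 2g₀z² − w₀f) − g₁² + f₁(g₀f₁ − f₀g₁)`.
Here `k[x,y]` is embedded in `k[x,y,z]` via `rename Fin.castSucc`. -/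
theorem manin_section_explicit_formula
    (k : Type*) [Field k] (f₀ g₀ w₀ : k)
    (hw : w₀ ^ 2 + f₀ * w₀ = g₀)
    (δ : k) (hδdef : δ = f₀ + 2 * w₀) (hδ : δ ≠ 0)
    (f₁ g₁ f₂ g₂ : MvPolynomial (Fin 2) k)
    (hf₁ : f₁.IsHomogeneous 1) (hg₁ : g₁.IsHomogeneous 1)
    (hf₂ : f₂.IsHomogeneous 2) (hg₂ : g₂.IsHomogeneous 2)
    (b a : MvPolynomial (Fin 2) k)
    (hb : b = C δ⁻¹ * (g₁ - C w₀ * f₁))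
    (ha : a = C δ⁻¹ * (g₂ - C w₀ * f₂ - b ^ 2 - f₁ * b))
    (f : MvPolynomial (Fin 3) k)
    (hf : f = rename Fin.castSucc f₂ + rename Fin.castSucc f₁ * X 2 + C f₀ * X 2 ^ 2) :
    C (δ ^ 3) * (rename Fin.castSucc a + rename Fin.castSucc b * X 2 + C w₀ * X 2 ^ 2)
      = C (δ ^ 2) * (rename Fin.castSucc g₂ + rename Fin.castSucc g₁ * X 2
          + C (2 * g₀) * X 2 ^ 2 - C w₀ * f)
        - (rename Fin.castSucc g₁) ^ 2
        + rename Fin.castSucc f₁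
          * (C g₀ * rename Fin.castSucc f₁ - C f₀ * rename Fin.castSucc g₁) := by
  have hD : (C δ : MvPolynomial (Fin 3) k) = C f₀ + 2 * C w₀ := by
    rw [hδdef, C_add, C_mul]; rfl
  have hG : (C g₀ : MvPolynomial (Fin 3) k) = C w₀ ^ 2 + C f₀ * C w₀ := by
    rw [← hw, C_add, C_mul, C_pow]
  have h2 : (C (2 * g₀) : MvPolynomial (Fin 3) k) = 2 * C g₀ := by
    rw [C_mul]; rfl
  have hi : (C δ : MvPolynomial (Fin 3) k) * C δ⁻¹ = 1 := by
    rw [← C_mul, mul_inv_cancel₀ hδ, C_1]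
  have hB : C δ * rename Fin.castSucc b
      = rename Fin.castSucc g₁ - C w₀ * rename (Fin.castSucc : Fin 2 → Fin 3) f₁ := by
    rw [hb]
    simp only [map_mul, map_sub, rename_C]
    rw [← mul_assoc, hi, one_mul]
  have hA : C δ * rename Fin.castSucc a
      = rename Fin.castSucc g₂ - C w₀ * rename (Fin.castSucc : Fin 2 → Fin 3) f₂
        - rename Fin.castSucc b ^ 2 - rename Fin.castSucc f₁ * rename Fin.castSucc b := by
    rw [ha]
    simp only [map_mul, map_sub, map_pow, rename_C]
    rw [← mul_assoc, hi, one_mul]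
  rw [hf, h2, hG, C_pow, C_pow]
  clear hf ha hb hi h2 hG
  generalize rename (Fin.castSucc : Fin 2 → Fin 3) a = A at *
  generalize rename (Fin.castSucc : Fin 2 → Fin 3) b = B at *
  generalize rename (Fin.castSucc : Fin 2 → Fin 3) f₁ = F₁ at *
  generalize rename (Fin.castSucc : Fin 2 → Fin 3) f₂ = F₂ at *
  generalize rename (Fin.castSucc : Fin 2 → Fin 3) g₁ = G₁ at *
  generalize rename (Fin.castSucc : Fin 2 → Fin 3) g₂ = G₂ at *
  rw [hD] at hA hB ⊢
  linear_combination (C f₀ + 2 * C w₀) ^ 2 * hA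
    + ((C f₀ + 2 * C w₀) ^ 2 * X 2 - ((C f₀ + 2 * C w₀) * B + G₁ - C w₀ * F₁)
      - (C f₀ + 2 * C w₀) * F₁) * hB
end

section
/- Let k be a field, let f₁, g₁ ∈ k[x,y] be homogeneous of degree 1, f₂, g₂ homogeneous of degree 2, g₃ homogeneous of degree 3, g₄ homogeneous of degree 4, and let f₀, g₀, w₀ ∈ k satisfy w₀² + f₀w₀ = g₀ with δ := f₀ + 2w₀ ≠ 0. Set f = f₂ + f₁z + f₀z² and g = g₄ + g₃z + g₂z² + g₁z³ + g₀z⁴ in k[x,y,z], and define W = δ²(g₂ + g₁z + 2g₀z² − w₀f) − g₁² + f₁(g₀f₁ − f₀g₁) and h = W² + δ³·f·W − δ⁶·g in k[x,y,z]. Write h = Σ_{i=0}^{4} h_i · z^{4−i} with h_i ∈ k[x,y] homogeneous of degree i. Then h₀ = h₁ = h₂ = 0; that is, the quartic plane curve h = 0 has a point of multiplicity at least 3 at Q = (0 : 0 : 1). -/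
open MvPolynomial

theorem whom_rename_aux {k : Type*} [Field k] {p : MvPolynomial (Fin 2) k} {n : ℕ}
    (hp : p.IsHomogeneous n) :
    IsWeightedHomogeneous (![1, 1, 0] : Fin 3 → ℕ) (rename Fin.castSucc p) n := by
  intro d hd
  obtain ⟨u, rfl, hu⟩ := coeff_rename_ne_zero _ _ _ hd
  have h1 := hp hu
  rw [Finsupp.weight_apply, Finsupp.sum_fintype _ _ (by simp)] at h1 ⊢
  have e0 : (Finsupp.mapDomain Fin.castSucc u) (0 : Fin 3) = u 0 :=
    Finsupp.mapDomain_apply (Fin.castSucc_injective 2) u 0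
  have e1 : (Finsupp.mapDomain Fin.castSucc u) (1 : Fin 3) = u 1 :=
    Finsupp.mapDomain_apply (Fin.castSucc_injective 2) u 1
  simp [Fin.sum_univ_succ] at h1 ⊢
  rw [e0, e1]
  exact h1


/-- Explicit content of Propositions 4.9(4) and 4.14: for the del Pezzo surface
`w² + fw = g` with `f = f₂ + f₁z + f₀z²`, `g = g₄ + g₃z + g₂z² + g₁z³ + g₀z⁴`, a point
`P = (0:0:1:w₀)` off the ramification locus (`δ = f₀ + 2w₀ ≠ 0`), and Manin's surface
`Y : δ³w = W` with `W = δ²(g₂ + g₁z + 2g₀z² − w₀f) − g₁² + f₁(g₀f₁ − f₀g₁)`, the plane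
quartic `h = W² + δ³fW − δ⁶g` has a point of multiplicity at least 3 at `Q = (0:0:1)`:
writing `h = Σ hᵢ z^{4−i}` with `hᵢ ∈ k[x,y]` homogeneous of degree `i`, one has
`h₀ = h₁ = h₂ = 0`, i.e. every monomial of `h` of `(x,y)`-degree at most 2 has zero
coefficient. -/
theorem manin_quartic_has_triple_point
    (k : Type*) [Field k] (f₀ g₀ w₀ : k)
    (hw : w₀ ^ 2 + f₀ * w₀ = g₀)
    (δ : k) (hδdef : δ = f₀ + 2 * w₀) (hδ : δ ≠ 0)
    (f₁ g₁ f₂ g₂ g₃ g₄ : MvPolynomial (Fin 2) k)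
    (hf₁ : f₁.IsHomogeneous 1) (hg₁ : g₁.IsHomogeneous 1)
    (hf₂ : f₂.IsHomogeneous 2) (hg₂ : g₂.IsHomogeneous 2)
    (hg₃ : g₃.IsHomogeneous 3) (hg₄ : g₄.IsHomogeneous 4)
    (f g : MvPolynomial (Fin 3) k)
    (hf : f = rename Fin.castSucc f₂ + rename Fin.castSucc f₁ * X 2 + C f₀ * X 2 ^ 2)
    (hg : g = rename Fin.castSucc g₄ + rename Fin.castSucc g₃ * X 2
        + rename Fin.castSucc g₂ * X 2 ^ 2 + rename Fin.castSucc g₁ * X 2 ^ 3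
        + C g₀ * X 2 ^ 4)
    (W : MvPolynomial (Fin 3) k)
    (hW : W = C (δ ^ 2) * (rename Fin.castSucc g₂ + rename Fin.castSucc g₁ * X 2
          + C (2 * g₀) * X 2 ^ 2 - C w₀ * f)
        - (rename Fin.castSucc g₁) ^ 2
        + rename Fin.castSucc f₁
          * (C g₀ * rename Fin.castSucc f₁ - C f₀ * rename Fin.castSucc g₁))
    (h : MvPolynomial (Fin 3) k)
    (hh : h = W ^ 2 + C (δ ^ 3) * f * W - C (δ ^ 6) * g) :
    ∀ m : Fin 3 →₀ ℕ, m 0 + m 1 ≤ 2 → coeff m h = 0 := by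
  have a₁ := whom_rename_aux hf₁
  have b₁ := whom_rename_aux hg₁
  have a₂ := whom_rename_aux hf₂
  have b₂ := whom_rename_aux hg₂
  have b₃ := whom_rename_aux hg₃
  have b₄ := whom_rename_aux hg₄
  generalize rename Fin.castSucc f₁ = F₁ at *
  generalize rename Fin.castSucc g₁ = G₁ at *
  generalize rename Fin.castSucc f₂ = F₂ at *
  generalize rename Fin.castSucc g₂ = G₂ at *
  generalize rename Fin.castSucc g₃ = G₃ at *
  generalize rename Fin.castSucc g₄ = G₄ at *
  have hc : ∀ (c : k) {p : MvPolynomial (Fin 3) k} {n : ℕ},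
      IsWeightedHomogeneous (![1, 1, 0] : Fin 3 → ℕ) p n →
      IsWeightedHomogeneous (![1, 1, 0] : Fin 3 → ℕ) (C c * p) n := by
    intro c p n hp
    have := (isWeightedHomogeneous_C (![1, 1, 0] : Fin 3 → ℕ) c).mul hp
    rwa [zero_add] at this
  have hs : ∀ {p q : MvPolynomial (Fin 3) k} {n : ℕ},
      IsWeightedHomogeneous (![1, 1, 0] : Fin 3 → ℕ) p n →
      IsWeightedHomogeneous (![1, 1, 0] : Fin 3 → ℕ) q n →
      IsWeightedHomogeneous (![1, 1, 0] : Fin 3 → ℕ) (p - q) n := by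
    intro p q n hp hq
    exact (weightedHomogeneousSubmodule k (![1, 1, 0] : Fin 3 → ℕ) n).sub_mem hp hq
  have hz : IsWeightedHomogeneous (![1, 1, 0] : Fin 3 → ℕ) (X 2 : MvPolynomial (Fin 3) k) 0 :=
    isWeightedHomogeneous_X k _ 2
  obtain ⟨W₁, hW₁⟩ : ∃ W₁, W₁ = C (δ ^ 2) * (G₁ - C w₀ * F₁) := ⟨_, rfl⟩
  obtain ⟨W₂, hW₂⟩ : ∃ W₂, W₂ = C (δ ^ 2) * (G₂ - C w₀ * F₂) - G₁ * G₁
      + F₁ * (C g₀ * F₁ - C f₀ * G₁) := ⟨_, rfl⟩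
  have c₁ : IsWeightedHomogeneous (![1, 1, 0] : Fin 3 → ℕ) W₁ 1 := by
    rw [hW₁]; exact hc _ (hs b₁ (hc _ a₁))
  have c₂ : IsWeightedHomogeneous (![1, 1, 0] : Fin 3 → ℕ) W₂ 2 := by
    rw [hW₂]
    exact (hs (hc _ (hs b₂ (hc _ a₂))) (b₁.mul b₁)).add (a₁.mul (hs (hc _ a₁) (hc _ b₁)))
  have d₃ : IsWeightedHomogeneous (![1, 1, 0] : Fin 3 → ℕ)
      ((C 2 * (W₁ * W₂) + C (δ ^ 3) * (F₁ * W₂ + W₁ * F₂) - C (δ ^ 6) * G₃) * X 2) 3 :=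
    (hs ((hc _ (c₁.mul c₂)).add (hc _ ((a₁.mul c₂).add (c₁.mul a₂)))) (hc _ b₃)).mul hz
  have d₄ : IsWeightedHomogeneous (![1, 1, 0] : Fin 3 → ℕ)
      (W₂ * W₂ + C (δ ^ 3) * (F₂ * W₂) - C (δ ^ 6) * G₄) 4 :=
    hs ((c₂.mul c₂).add (hc _ (a₂.mul c₂))) (hc _ b₄)
  have key : h = (C 2 * (W₁ * W₂) + C (δ ^ 3) * (F₁ * W₂ + W₁ * F₂) - C (δ ^ 6) * G₃) * X 2
      + (W₂ * W₂ + C (δ ^ 3) * (F₂ * W₂) - C (δ ^ 6) * G₄) := by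
    have h2 : (C 2 : MvPolynomial (Fin 3) k) = 2 := map_ofNat C 2
    subst hh hW hg hf hW₁ hW₂ hδdef hw
    simp only [map_add, map_mul, map_pow, h2]
    ring
  intro m hm
  have hwt : Finsupp.weight (![1, 1, 0] : Fin 3 → ℕ) m = m 0 + m 1 := by
    rw [Finsupp.weight_apply, Finsupp.sum_fintype _ _ (by simp)]
    simp [Fin.sum_univ_succ]
  rw [key, coeff_add, d₃.coeff_eq_zero m (by omega), d₄.coeff_eq_zero m (by omega), add_zero]
end

section
/- Let K be an algebraically closed field of characteristic 3 and let F = w² + (x² + y²)² + y³z − yz³ ∈ K[x,y,z,w]. Then there is no point (x₀,y₀,z₀,w₀) ∈ K⁴ with (x₀,y₀,z₀) ≠ (0,0,0) at which F and all four partial derivatives ∂F/∂x, ∂F/∂y, ∂F/∂z, ∂F/∂w vanish simultaneously. -/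
open MvPolynomial

/-- Smoothness of the surface `X₁ : −w² = (x²+y²)² + y³z − yz³` (Section 3): over an
algebraically closed field `K` of characteristic 3, the polynomial
`F = w² + (x²+y²)² + y³z − yz³` and its four partial derivatives have no common zero
with `(x,y,z) ≠ (0,0,0)`. -/
theorem X1_smooth
    (K : Type*) [Field K] [IsAlgClosed K] [CharP K 3]
    (F : MvPolynomial (Fin 4) K)
    (hF : F = (X 3) ^ 2 + ((X 0) ^ 2 + (X 1) ^ 2) ^ 2 + (X 1) ^ 3 * X 2
        - X 1 * (X 2) ^ 3) :
    ¬ ∃ P : Fin 4 → K, ¬ (P 0 = 0 ∧ P 1 = 0 ∧ P 2 = 0) ∧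
        eval P F = 0 ∧ ∀ i : Fin 4, eval P (pderiv i F) = 0 := by
  rintro ⟨P, hne, -, hd⟩
  have h3 : (3 : K) = 0 := by exact_mod_cast CharP.cast_eq_zero K 3
  have h0 := hd 0
  have h1 := hd 1
  have h2 := hd 2
  subst hF
  simp [pderiv_X, Pi.single_apply, Derivation.leibniz, Derivation.leibniz_pow] at h0 h1 h2
  have y0 : P 1 = 0 := by
    apply pow_eq_zero_iff (n := 3) (by norm_num) |>.1
    linear_combination h2 + P 1 * P 2 ^ 2 * h3
  simp only [y0] at h0 h1
  have z0 : P 2 = 0 := by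
    apply pow_eq_zero_iff (n := 3) (by norm_num) |>.1
    linear_combination -h1
  have h2' : (2 : K) ≠ 0 := by
    intro h
    exact one_ne_zero (α := K) (by linear_combination h3 - h)
  have x0 : P 0 = 0 := by
    simpa [h2'] using h0
  exact hne ⟨x0, y0, z0⟩
end

section
/- Let K be an algebraically closed field of characteristic 3 and let F = w² + x⁴ + y³z − yz³ ∈ K[x,y,z,w]. Then there is no point (x₀,y₀,z₀,w₀) ∈ K⁴ with (x₀,y₀,z₀) ≠ (0,0,0) at which F and all four partial derivatives ∂F/∂x, ∂F/∂y, ∂F/∂z, ∂F/∂w vanish simultaneously. -/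
open MvPolynomial

/-- Smoothness of the surface `X₂ : −w² = x⁴ + y³z − yz³` (Section 3): over an
algebraically closed field `K` of characteristic 3, the polynomial
`F = w² + x⁴ + y³z − yz³` and its four partial derivatives have no common zero
with `(x,y,z) ≠ (0,0,0)`. -/
theorem X2_smooth
    (K : Type*) [Field K] [IsAlgClosed K] [CharP K 3]
    (F : MvPolynomial (Fin 4) K)
    (hF : F = (X 3) ^ 2 + (X 0) ^ 4 + (X 1) ^ 3 * X 2 - X 1 * (X 2) ^ 3) :
    ¬ ∃ P : Fin 4 → K, ¬ (P 0 = 0 ∧ P 1 = 0 ∧ P 2 = 0) ∧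
        eval P F = 0 ∧ ∀ i : Fin 4, eval P (pderiv i F) = 0 := by
  rintro ⟨P, hP, -, h⟩
  have h3 : (3 : K) = 0 := by exact_mod_cast CharP.cast_eq_zero K 3
  have h0 := h 0
  have h1 := h 1
  have h2 := h 2
  subst hF
  simp [pderiv_X, Pi.single_apply, Derivation.leibniz, Derivation.leibniz_pow] at h0 h1 h2
  apply hP
  refine ⟨?_, ?_, ?_⟩
  · have : P 0 ^ 3 = 0 := by grind
    exact pow_eq_zero_iff (by norm_num) |>.mp this
  · have : P 1 ^ 3 = 0 := by grind
    exact pow_eq_zero_iff (by norm_num) |>.mp this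
  · have : P 2 ^ 3 = 0 := by grind
    exact pow_eq_zero_iff (by norm_num) |>.mp this
end
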